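/- Suppose g(r) = o(e^{-c r}) as r → ∞ for some c > 0, and fix γ > 0. Let Δ_n denote the maximum vertex degree of G_n(r̂_n(γ)). Then almost surely, lim_{n→∞} Δ_n/(log n) = γ·H₊⁻¹(1/γ). -/

import Mathlib

open MeasureTheory ProbabilityTheory Filter Set

noncomputable section

namespace RCM

/-- The toroidal metric on the unit cube. -/
def torusDist {d : ℕ} (x y : EuclideanSpace ℝ (Fin d)) : ℝ :=
  ⨅ z : Fin d → ℤ, ‖x - y - (WithLp.equiv 2 (Fin d → ℝ)).symm (fun i => (z i : ℝ))‖

/-- The half-open unit cube `S = (-1/2, 1/2]^d`. -/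
def cube (d : ℕ) : Set (EuclideanSpace ℝ (Fin d)) :=
  {x | ∀ i, x i ∈ Set.Ioc (-(1/2) : ℝ) (1/2)}

/-- The random connection model: i.i.d. uniform points `X`, coupled Poisson counts `N`,
i.i.d. uniform edge variables `U`, with the three families mutually independent, and a
non-increasing connection function `g : [0,∞) → [0,1]` with finite positive integral `α`. -/
structure Model (d : ℕ) {Ω : Type*} [MeasurableSpace Ω] (P : Measure Ω) where
  g : ℝ → ℝ
  α : ℝ
  X : ℕ → Ω → EuclideanSpace ℝ (Fin d)
  N : ℕ → Ω → ℕ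
  U : ℕ → ℕ → Ω → ℝ
  g_antitone : AntitoneOn g (Set.Ici 0)
  g_mem : ∀ r : ℝ, 0 ≤ r → g r ∈ Set.Icc (0 : ℝ) 1
  g_integrable : MeasureTheory.Integrable (fun x : EuclideanSpace ℝ (Fin d) => g ‖x‖)
  α_def : α = ∫ x : EuclideanSpace ℝ (Fin d), g ‖x‖
  α_pos : 0 < α
  X_meas : ∀ i, Measurable (X i)
  X_unif : ∀ i : ℕ, 1 ≤ i → Measure.map (X i) P = volume.restrict (cube d)
  X_indep : iIndepFun
    (fun i : {i : ℕ // 1 ≤ i} => X i) P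
  N_meas : ∀ n, Measurable (N n)
  N_mono : ∀ ω, Monotone fun n => N n ω
  N_poisson : ∀ n k : ℕ,
    P {ω | N n ω = k} = ENNReal.ofReal (Real.exp (-(n : ℝ)) * (n : ℝ) ^ k / k.factorial)
  U_meas : ∀ i j, Measurable (U i j)
  U_unif : ∀ i j : ℕ, 1 ≤ i → i < j →
    Measure.map (U i j) P = volume.restrict (Set.Icc (0 : ℝ) 1)
  U_indep : iIndepFun
    (fun p : {p : ℕ × ℕ // 1 ≤ p.1 ∧ p.1 < p.2} => U p.1.1 p.1.2) P
  families_indep : iIndep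
    (![MeasurableSpace.comap (fun ω => fun i : ℕ => X i ω) inferInstance,
       MeasurableSpace.comap (fun ω => fun n : ℕ => N n ω) inferInstance,
       MeasurableSpace.comap (fun ω => fun p : ℕ × ℕ => U p.1 p.2 ω) inferInstance]) P

variable {d : ℕ} {Ω : Type*} [MeasurableSpace Ω] {P : Measure Ω}

/-- Adjacency in the graph `G_n(r)`: vertices `1 ≤ i,j ≤ N_n` are joined iff
`U_{ij} ≤ g(dist(X_i,X_j)/r)`. -/
def adj (M : Model d P) (n : ℕ) (r : ℝ) (ω : Ω) (i j : ℕ) : Prop :=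
  i ≠ j ∧ 1 ≤ i ∧ 1 ≤ j ∧ i ≤ M.N n ω ∧ j ≤ M.N n ω ∧
    M.U (min i j) (max i j) ω ≤ M.g (torusDist (M.X i ω) (M.X j ω) / r)

/-- The degree of vertex `i` in `G_n(r)`. -/
def deg (M : Model d P) (n : ℕ) (r : ℝ) (ω : Ω) (i : ℕ) : ℕ :=
  {j : ℕ | adj M n r ω i j}.ncard

/-- `W_n(r)`, the number of isolated vertices of `G_n(r)`. -/
def isolatedCount (M : Model d P) (n : ℕ) (r : ℝ) (ω : Ω) : ℕ :=
  {i : ℕ | 1 ≤ i ∧ i ≤ M.N n ω ∧ deg M n r ω i = 0}.ncard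


/-- `r̂_n(γ)` defined by `r̂_n(γ)^d = γ log n / (α n)`. -/
def rhat (M : Model d P) (γ : ℝ) (n : ℕ) : ℝ :=
  (γ * Real.log n / (M.α * n)) ^ ((1 : ℝ) / d)

/-- `d_n`, the critical parameter for absence of isolated nodes. -/
def critRadius (M : Model d P) (n : ℕ) (ω : Ω) : ℝ :=
  sInf {r : ℝ | 0 < r ∧ isolatedCount M n r ω = 0}

/-- The maximum vertex degree `Δ_n` of `G_n(r)`. -/
def maxDeg (M : Model d P) (n : ℕ) (r : ℝ) (ω : Ω) : ℕ :=
  (Finset.Icc 1 (M.N n ω)).sup (deg M n r ω)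

/-- The minimum vertex degree `δ_n` of `G_n(r)`. -/
def minDeg (M : Model d P) (n : ℕ) (r : ℝ) (ω : Ω) : ℕ :=
  sInf {k : ℕ | ∃ i, 1 ≤ i ∧ i ≤ M.N n ω ∧ deg M n r ω i = k}

/-- The length (toroidal metric) of the longest edge of `G_n(r)` (`0` if there are no edges). -/
def longestEdge (M : Model d P) (n : ℕ) (r : ℝ) (ω : Ω) : ℝ :=
  sSup ({0} ∪ {t : ℝ | ∃ i j, adj M n r ω i j ∧ t = torusDist (M.X i ω) (M.X j ω)})

/-- Connectivity of `G_n(r)`: any two vertices are joined by a path. -/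
def connectedGraph (M : Model d P) (n : ℕ) (r : ℝ) (ω : Ω) : Prop :=
  ∀ i j : ℕ, 1 ≤ i → i ≤ M.N n ω → 1 ≤ j → j ≤ M.N n ω →
    Relation.ReflTransGen (adj M n r ω) i j

/-- `H(x) = 1 - x + x log x` (with `H(0) = 1`, since `log 0 = 0` in Lean). -/
def H (x : ℝ) : ℝ := 1 - x + x * Real.log x

/-- The inverse of the restriction of `H` to `[1, ∞)`. -/
def Hplusinv (y : ℝ) : ℝ := sInf {x : ℝ | 1 ≤ x ∧ y ≤ H x}

/-- The inverse of the restriction of `H` to `[0, 1]`. -/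
def Hminusinv (y : ℝ) : ℝ := sInf {x : ℝ | 0 ≤ x ∧ H x ≤ y}

/-- The standard normal distribution function. -/
def stdNormalCDF (x : ℝ) : ℝ :=
  ∫ t in Set.Iic x, Real.exp (-t ^ 2 / 2) / Real.sqrt (2 * Real.pi)

end RCM

namespace RCM

/-- The integer vector nearest to `x - y`, as a translation. -/
def nearestLattice {d : ℕ} (x y : EuclideanSpace ℝ (Fin d)) : Fin d → ℤ :=
  fun i => round (x i - y i)

lemma torusDist_bddBelow {d : ℕ} (x y : EuclideanSpace ℝ (Fin d)) :
    BddBelow (Set.range fun z : Fin d → ℤ =>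
      ‖x - y - (WithLp.equiv 2 (Fin d → ℝ)).symm (fun i => (z i : ℝ))‖) :=
  ⟨0, by rintro _ ⟨z, rfl⟩; exact norm_nonneg _⟩

lemma torusDist_eq_norm_nearest {d : ℕ} (x y : EuclideanSpace ℝ (Fin d)) :
    torusDist x y =
      ‖x - y - (WithLp.equiv 2 (Fin d → ℝ)).symm (fun i => (nearestLattice x y i : ℝ))‖ := by
  refine le_antisymm (ciInf_le (torusDist_bddBelow x y) _) (le_ciInf fun z => ?_)
  rw [EuclideanSpace.norm_eq, EuclideanSpace.norm_eq]
  refine Real.sqrt_le_sqrt (Finset.sum_le_sum fun i _ => ?_)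
  refine pow_le_pow_left₀ (norm_nonneg _) ?_ 2
  simpa [nearestLattice] using round_le (x i - y i) (z i)

lemma torusDist_eq_sqrt {d : ℕ} (x y : EuclideanSpace ℝ (Fin d)) :
    torusDist x y =
      Real.sqrt (∑ i, ‖((x i : ℝ) : UnitAddCircle) - ((y i : ℝ) : UnitAddCircle)‖ ^ 2) := by
  rw [torusDist_eq_norm_nearest, EuclideanSpace.norm_eq]
  congr 1
  refine Finset.sum_congr rfl fun i _ => ?_
  rw [← AddCircle.coe_sub, UnitAddCircle.norm_eq]
  simp [nearestLattice]

lemma torusDist_nonneg {d : ℕ} (x y : EuclideanSpace ℝ (Fin d)) : 0 ≤ torusDist x y := by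
  rw [torusDist_eq_sqrt]; exact Real.sqrt_nonneg _

/-- Triangle inequality for the toroidal metric. -/
lemma torusDist_le_add {d : ℕ} (x x' y : EuclideanSpace ℝ (Fin d)) :
    torusDist x x' ≤ torusDist x y + torusDist x' y := by
  rw [torusDist_eq_norm_nearest x y, torusDist_eq_norm_nearest x' y]
  refine (ciInf_le (torusDist_bddBelow x x')
    (nearestLattice x y - nearestLattice x' y)).trans ((le_of_eq ?_).trans (norm_sub_le _ _))
  congr 1
  ext i
  simp
  ring

lemma measurable_torusDist {d : ℕ} :
    Measurable fun p : EuclideanSpace ℝ (Fin d) × EuclideanSpace ℝ (Fin d) =>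
      torusDist p.1 p.2 := by
  simp_rw [torusDist_eq_sqrt]
  refine Continuous.measurable ?_
  have hc : Continuous (fun t : ℝ => (t : UnitAddCircle)) := AddCircle.continuous_mk' 1
  fun_prop

lemma measurableSet_cube (d : ℕ) : MeasurableSet (cube d) := by
  have : cube d = ⋂ i, (fun x : EuclideanSpace ℝ (Fin d) => x i) ⁻¹' Ioc (-(1/2) : ℝ) (1/2) := by
    ext x; simp [cube]
  rw [this]
  refine MeasurableSet.iInter fun i => measurableSet_Ioc.preimage ?_
  fun_prop

/-- The projection of the cube with Lebesgue measure onto the torus preserves measure. -/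
lemma measurePreserving_cube_mk (d : ℕ) :
    MeasurePreserving
      (fun (y : EuclideanSpace ℝ (Fin d)) (i : Fin d) => ((y i : ℝ) : UnitAddCircle))
      (volume.restrict (cube d)) volume := by
  have h1 : MeasurePreserving (fun (y : Fin d → ℝ) (i : Fin d) => ((y i : ℝ) : UnitAddCircle))
      (Measure.pi fun _ : Fin d => volume.restrict (Ioc (-(1/2) : ℝ) (-(1/2) + 1))) volume :=
    measurePreserving_pi _ _ fun _ => UnitAddCircle.measurePreserving_mk (-(1/2))
  have h2 : MeasurePreserving (WithLp.ofLp : EuclideanSpace ℝ (Fin d) → (Fin d → ℝ))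
      (volume.restrict (cube d))
      (volume.restrict (Set.univ.pi fun _ : Fin d => Ioc (-(1/2) : ℝ) (-(1/2) + 1))) := by
    have hcube : cube d = WithLp.ofLp ⁻¹'
        (Set.univ.pi fun _ : Fin d => Ioc (-(1/2) : ℝ) (-(1/2) + 1)) := by
      ext x
      rw [Set.mem_preimage, Set.mem_univ_pi]
      norm_num [cube]
    rw [hcube]
    exact (PiLp.volume_preserving_ofLp (Fin d)).restrict_preimage
      (MeasurableSet.univ_pi fun _ => measurableSet_Ioc)
  rw [volume_pi, Measure.restrict_pi_pi] at h2
  exact h1.comp h2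

/-- Integrals over the cube of functions of the toroidal distance do not depend on the
base point. -/
lemma lintegral_cube_torusDist {d : ℕ} (x : EuclideanSpace ℝ (Fin d)) {F : ℝ → ENNReal}
    (hF : Measurable F) :
    ∫⁻ y in cube d, F (torusDist x y) = ∫⁻ y in cube d, F ‖y‖ := by
  have hmeas : Measurable fun c : Fin d → UnitAddCircle => F (Real.sqrt (∑ i, ‖c i‖ ^ 2)) := by
    refine hF.comp (Continuous.measurable ?_)
    fun_prop
  have hx : ∫⁻ y in cube d, F (torusDist x y) =
      ∫⁻ c : Fin d → UnitAddCircle,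
        F (Real.sqrt (∑ i, ‖((x i : ℝ) : UnitAddCircle) - c i‖ ^ 2)) := by
    rw [← (measurePreserving_cube_mk d).lintegral_comp]
    · simp_rw [torusDist_eq_sqrt]
    · refine hF.comp (Continuous.measurable ?_)
      fun_prop
  have h0 : ∫⁻ y in cube d, F ‖y‖ =
      ∫⁻ c : Fin d → UnitAddCircle,
        F (Real.sqrt (∑ i, ‖c i‖ ^ 2)) := by
    rw [← (measurePreserving_cube_mk d).lintegral_comp hmeas]
    refine setLIntegral_congr_fun (measurableSet_cube d) fun y hy => ?_
    simp only
    rw [EuclideanSpace.norm_eq]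
    congr 3
    funext i
    have hi := hy i
    rw [(AddCircle.norm_coe_eq_abs_iff (p := (1 : ℝ)) (by norm_num)).2]
    · simp
    · rw [abs_one]
      exact abs_le.2 ⟨hi.1.le, hi.2⟩
  rw [hx, h0]
  simp_rw [norm_sub_rev]
  exact lintegral_sub_right_eq_self
    (fun c : Fin d → UnitAddCircle => F (Real.sqrt (∑ i, ‖c i‖ ^ 2)))
    (fun i => ((x i : ℝ) : UnitAddCircle))

end RCM

namespace RCM

/-- The upper tail `P(Bin(N, q) ≥ k)` of the binomial distribution. -/
def binTail (q : ℝ) : ℕ → ℕ → ℝ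
  | _, 0 => 1
  | 0, _ + 1 => 0
  | N + 1, k + 1 => (1 - q) * binTail q N (k + 1) + q * binTail q N k

lemma binTail_zero_right (q : ℝ) (N : ℕ) : binTail q N 0 = 1 := by cases N <;> rfl

lemma binTail_succ_succ (q : ℝ) (N k : ℕ) :
    binTail q (N + 1) (k + 1) = (1 - q) * binTail q N (k + 1) + q * binTail q N k := rfl

lemma binTail_nonneg {q : ℝ} (h0 : 0 ≤ q) (h1 : q ≤ 1) (N k : ℕ) : 0 ≤ binTail q N k := by
  induction N generalizing k with
  | zero => cases k <;> simp [binTail]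
  | succ N ih =>
    cases k with
    | zero => simp [binTail]
    | succ k =>
      have := mul_nonneg (sub_nonneg.2 h1) (ih (k + 1))
      have := mul_nonneg h0 (ih k)
      rw [binTail_succ_succ]; linarith

lemma binTail_succ_right_le {q : ℝ} (h0 : 0 ≤ q) (h1 : q ≤ 1) (N k : ℕ) :
    binTail q N (k + 1) ≤ binTail q N k := by
  induction N generalizing k with
  | zero => cases k <;> simp [binTail]
  | succ N ih =>
    cases k with
    | zero =>
      have h := ih 0
      rw [binTail_zero_right] at h
      rw [binTail_succ_succ, binTail_zero_right, binTail_zero_right]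
      nlinarith
    | succ k =>
      rw [binTail_succ_succ, binTail_succ_succ]
      exact add_le_add (mul_le_mul_of_nonneg_left (ih _) (sub_nonneg.2 h1))
        (mul_le_mul_of_nonneg_left (ih _) h0)

/-- Chernoff bound for the binomial distribution. -/
lemma binTail_le_exp {q t : ℝ} (h0 : 0 ≤ q) (h1 : q ≤ 1) (ht : 0 ≤ t) (N k : ℕ) :
    binTail q N k ≤ Real.exp (-(t * k)) * (1 + q * (Real.exp t - 1)) ^ N := by
  have he : 1 ≤ Real.exp t := Real.one_le_exp ht
  have hb : 1 ≤ 1 + q * (Real.exp t - 1) := by nlinarith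
  induction N generalizing k with
  | zero => cases k <;> simp [binTail, Real.exp_nonneg]
  | succ N ih =>
    cases k with
    | zero => simpa [binTail] using one_le_pow₀ hb
    | succ k =>
      rw [binTail_succ_succ]
      have e1 : Real.exp (-(t * k)) = Real.exp (-(t * ((k + 1 : ℕ) : ℝ))) * Real.exp t := by
        rw [← Real.exp_add]; push_cast; ring_nf
      have i1 := mul_le_mul_of_nonneg_left (ih (k + 1)) (sub_nonneg.2 h1)
      have i2 := mul_le_mul_of_nonneg_left (ih k) h0
      rw [e1] at i2
      refine (add_le_add i1 i2).trans (le_of_eq ?_)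
      ring

lemma choose_mul_le_binTail {q : ℝ} (h0 : 0 ≤ q) (h1 : q ≤ 1) (N k : ℕ) :
    (N.choose k : ℝ) * q ^ k * (1 - q) ^ N ≤ binTail q N k := by
  have hq : 0 ≤ 1 - q := sub_nonneg.2 h1
  induction N generalizing k with
  | zero => cases k <;> simp [binTail]
  | succ N ih =>
    cases k with
    | zero => simpa [binTail] using pow_le_one₀ hq (by linarith)
    | succ k =>
      rw [binTail_succ_succ, Nat.choose_succ_succ]
      have i1 := mul_le_mul_of_nonneg_left (ih (k + 1)) hq
      have i2 := mul_le_mul_of_nonneg_left (ih k) h0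
      have i3 : 0 ≤ (N.choose k : ℝ) * q ^ (k + 1) * (1 - q) ^ N * q := by positivity
      refine le_trans ?_ (add_le_add i1 i2)
      push_cast
      rw [pow_succ (1 - q) N]
      have : q * ((N.choose k : ℝ) * q ^ k * (1 - q) ^ N) -
          (N.choose k : ℝ) * q ^ (k + 1) * ((1 - q) ^ N * (1 - q)) =
          (N.choose k : ℝ) * q ^ (k + 1) * (1 - q) ^ N * q := by ring
      have e : ((N.choose k : ℝ) + (N.choose (k + 1) : ℝ)) * q ^ (k + 1) *
          ((1 - q) ^ N * (1 - q)) = (N.choose k : ℝ) * q ^ (k + 1) * ((1 - q) ^ N * (1 - q)) +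
          (1 - q) * ((N.choose (k + 1) : ℝ) * q ^ (k + 1) * (1 - q) ^ N) := by ring
      linarith

section Count

variable {Ω ι : Type*}

open scoped Classical in
/-- The number of events `A j`, `j ∈ s`, that occur. -/
def count (A : ι → Set Ω) (s : Finset ι) (ω : Ω) : ℕ := (s.filter fun j => ω ∈ A j).card

lemma count_empty (A : ι → Set Ω) (ω : Ω) : count A ∅ ω = 0 := by simp [count]

open scoped Classical in
lemma count_insert (A : ι → Set Ω) {s : Finset ι} {a : ι} (ha : a ∉ s) (ω : Ω) :
    count A (insert a s) ω = count A s ω + if ω ∈ A a then 1 else 0 := by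
  rw [count, Finset.filter_insert]
  split_ifs with h
  · rw [Finset.card_insert_of_notMem (by simp [ha]), count]
  · simp [count]

lemma measurableSet_le_count {mΩ : MeasurableSpace Ω} {A : ι → Set Ω} {s : Finset ι}
    (hA : ∀ j ∈ s, MeasurableSet (A j)) (k : ℕ) : MeasurableSet {ω | k ≤ count A s ω} := by
  classical
  have : Measurable (count A s) := by
    have e : count A s = fun ω => ∑ j ∈ s, (A j).indicator (fun _ => (1 : ℕ)) ω := by
      funext ω
      simp only [count, Set.indicator_apply]
      exact Finset.card_filter _ _
    rw [e]
    exact Finset.measurable_sum _ fun j hj => measurable_const.indicator (hA j hj)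
  exact this measurableSet_Ici

lemma measurableSet_le_count_iSup {m : ι → MeasurableSpace Ω} {A : ι → Set Ω} {s : Finset ι}
    (hA : ∀ j ∈ s, MeasurableSet[m j] (A j)) (k : ℕ) :
    MeasurableSet[⨆ j ∈ (s : Set ι), m j] {ω | k ≤ count A s ω} :=
  measurableSet_le_count (mΩ := ⨆ j ∈ (s : Set ι), m j)
    (fun j hj => le_iSup₂ (f := fun j (_ : j ∈ (s : Set ι)) => m j) j (by simpa using hj)
      _ (hA j hj)) k

variable [mΩ : MeasurableSpace Ω] {P : Measure Ω} {m : ι → MeasurableSpace Ω} {A B : ι → Set Ω}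
  {q : ℝ}

lemma measureReal_inter_of_indep {m₁ m₂ : MeasurableSpace Ω} (h : Indep m₁ m₂ P) {Q R : Set Ω}
    (hQ : MeasurableSet[m₁] Q) (hR : MeasurableSet[m₂] R) :
    P.real (Q ∩ R) = P.real Q * P.real R := by
  simp [Measure.real, (Indep_iff _ _ P).1 h Q R hQ hR]

variable [IsProbabilityMeasure P]

/-- The number of independent events of probability `q` that occur is binomial. -/
lemma measureReal_le_count (hm : ∀ j, m j ≤ mΩ)
    (hind : ∀ (t : Finset ι) (a : ι), a ∉ t → Indep (m a) (⨆ j ∈ (t : Set ι), m j) P) (s : Finset ι)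
    (hA : ∀ j ∈ s, MeasurableSet[m j] (A j)) (hq : ∀ j ∈ s, P.real (A j) = q) (k : ℕ) :
    P.real {ω | k ≤ count A s ω} = binTail q s.card k := by
  classical
  induction s using Finset.induction_on generalizing k with
  | empty => cases k <;> simp [count_empty, binTail]
  | insert a s ha ih =>
    cases k with
    | zero => simp [binTail_zero_right]
    | succ k =>
      have hA' : ∀ j ∈ s, MeasurableSet[m j] (A j) := fun j hj => hA j (by simp [hj])
      have ih := ih hA' fun j hj => hq j (by simp [hj])
      have hAa := hA a (by simp)
      have e : {ω | k + 1 ≤ count A (insert a s) ω} =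
          (A a ∩ {ω | k ≤ count A s ω}) ∪ ((A a)ᶜ ∩ {ω | k + 1 ≤ count A s ω}) := by
        ext ω
        by_cases h : ω ∈ A a <;> simp [count_insert A ha, h]
      rw [Finset.card_insert_of_notMem ha, binTail_succ_succ, e, measureReal_union]
      · rw [measureReal_inter_of_indep (hind s a ha) hAa (measurableSet_le_count_iSup hA' _),
          measureReal_inter_of_indep (hind s a ha) hAa.compl (measurableSet_le_count_iSup hA' _),
          probReal_compl_eq_one_sub (hm a _ hAa), hq a (by simp), ih, ih]
        ring
      · exact Set.disjoint_left.2 fun ω h1 h2 => h2.1 h1.1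
      · exact ((hm a _ hAa).compl).inter (measurableSet_le_count (fun j hj => hm j _ (hA' j hj)) _)

/-- Counts of pairwise incompatible events are negatively correlated. -/
lemma measureReal_le_count_inter_le (h0 : 0 ≤ q) (h1 : q ≤ 1)
    (hm : ∀ j, m j ≤ mΩ)
    (hind : ∀ (t : Finset ι) (a : ι), a ∉ t → Indep (m a) (⨆ j ∈ (t : Set ι), m j) P) (s : Finset ι)
    (hA : ∀ j ∈ s, MeasurableSet[m j] (A j)) (hqA : ∀ j ∈ s, P.real (A j) = q)
    (hB : ∀ j ∈ s, MeasurableSet[m j] (B j)) (hqB : ∀ j ∈ s, P.real (B j) = q)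
    (hAB : ∀ j ∈ s, Disjoint (A j) (B j)) (k l : ℕ) :
    P.real ({ω | k ≤ count A s ω} ∩ {ω | l ≤ count B s ω}) ≤
      binTail q s.card k * binTail q s.card l := by
  classical
  induction s using Finset.induction_on generalizing k l with
  | empty => cases k <;> cases l <;> simp [count_empty, binTail]
  | insert a s ha ih =>
    cases k with
    | zero =>
      rw [binTail_zero_right, one_mul, ← measureReal_le_count hm hind _ hB hqB]
      exact measureReal_mono Set.inter_subset_right
    | succ k =>
      cases l with
      | zero =>
        rw [binTail_zero_right, mul_one, ← measureReal_le_count hm hind _ hA hqA]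
        exact measureReal_mono Set.inter_subset_left
      | succ l =>
        have hA' : ∀ j ∈ s, MeasurableSet[m j] (A j) := fun j hj => hA j (by simp [hj])
        have hB' : ∀ j ∈ s, MeasurableSet[m j] (B j) := fun j hj => hB j (by simp [hj])
        have ih := ih hA' (fun j hj => hqA j (by simp [hj])) hB'
          (fun j hj => hqB j (by simp [hj])) (fun j hj => hAB j (by simp [hj]))
        have hAa := hA a (by simp)
        have hBa := hB a (by simp)
        have hd := hAB a (by simp)
        have e : {ω | k + 1 ≤ count A (insert a s) ω} ∩ {ω | l + 1 ≤ count B (insert a s) ω} ⊆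
            (A a ∩ ({ω | k ≤ count A s ω} ∩ {ω | l + 1 ≤ count B s ω})) ∪
            (B a ∩ ({ω | k + 1 ≤ count A s ω} ∩ {ω | l ≤ count B s ω})) ∪
            ((A a ∪ B a)ᶜ ∩ ({ω | k + 1 ≤ count A s ω} ∩ {ω | l + 1 ≤ count B s ω})) := by
          intro ω
          have hd' : ω ∈ A a → ω ∉ B a := fun h => Set.disjoint_left.1 hd h
          by_cases hωA : ω ∈ A a <;> by_cases hωB : ω ∈ B a <;>
            simp [count_insert A ha, count_insert B ha, hωA, hωB] at hd' ⊢
        have hc : P.real ((A a ∪ B a)ᶜ) = 1 - 2 * q := by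
          rw [probReal_compl_eq_one_sub ((hm a _ hAa).union (hm a _ hBa)),
            measureReal_union hd (hm a _ hBa), hqA a (by simp), hqB a (by simp)]
          ring
        have hc0 : 0 ≤ 1 - 2 * q := hc ▸ measureReal_nonneg
        refine (measureReal_mono e).trans ((measureReal_union_le _ _).trans
          ((add_le_add_left (measureReal_union_le _ _) _).trans ?_))
        have hmeas : ∀ k l, MeasurableSet[⨆ j ∈ (s : Set ι), m j]
            ({ω | k ≤ count A s ω} ∩ {ω | l ≤ count B s ω}) := fun k l =>
          (measurableSet_le_count_iSup hA' k).inter (measurableSet_le_count_iSup hB' l)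
        rw [measureReal_inter_of_indep (hind s a ha) hAa (hmeas _ _),
          measureReal_inter_of_indep (hind s a ha) hBa (hmeas _ _),
          measureReal_inter_of_indep (hind s a ha) (hAa.union hBa).compl (hmeas _ _),
          hc, hqA a (by simp), hqB a (by simp), Finset.card_insert_of_notMem ha,
          binTail_succ_succ, binTail_succ_succ]
        have j1 := mul_le_mul_of_nonneg_left (ih k (l + 1)) h0
        have j2 := mul_le_mul_of_nonneg_left (ih (k + 1) l) h0
        have j3 := mul_le_mul_of_nonneg_left (ih (k + 1) (l + 1)) hc0
        have j4 : 0 ≤ q ^ 2 * ((binTail q s.card k - binTail q s.card (k + 1)) *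
            (binTail q s.card l - binTail q s.card (l + 1))) :=
          mul_nonneg (sq_nonneg _) (mul_nonneg (sub_nonneg.2 (binTail_succ_right_le h0 h1 _ _))
            (sub_nonneg.2 (binTail_succ_right_le h0 h1 _ _)))
        nlinarith

/-- Second moment bound for the probability that none of finitely many events occurs. -/
lemma measureReal_iInter_compl_le {s : Finset ι} (hs : s.Nonempty) {p c : ℝ} (hp : 0 < p)
    (hA : ∀ i ∈ s, MeasurableSet (A i)) (hAp : ∀ i ∈ s, P.real (A i) = p)
    (hc : 0 ≤ c) (hAA : ∀ i ∈ s, ∀ j ∈ s, i ≠ j → P.real (A i ∩ A j) ≤ c * p + p ^ 2) :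
    P.real {ω | ∀ i ∈ s, ω ∉ A i} ≤ 1 / (s.card * p) + c / p := by
  classical
  have hn : (0 : ℝ) < s.card := by exact_mod_cast hs.card_pos
  set W : Ω → ℝ := fun ω => ∑ i ∈ s, (A i).indicator (fun _ => (1 : ℝ)) ω with hW
  have hAint : ∀ i ∈ s, Integrable ((A i).indicator fun _ => (1 : ℝ)) P := fun i hi =>
    (integrable_const _).indicator (hA i hi)
  have hE : ∫ ω, W ω ∂P = s.card * p := by
    rw [hW, integral_finsetSum _ hAint, Finset.sum_congr rfl fun i hi => ?_, Finset.sum_const,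
      nsmul_eq_mul]
    rw [integral_indicator_const _ (hA i hi), hAp i hi]; simp
  have hprod : ∀ ω, W ω ^ 2 =
      ∑ i ∈ s, ∑ j ∈ s, (A i ∩ A j).indicator (fun _ => (1 : ℝ)) ω := by
    intro ω
    rw [hW, sq, Finset.sum_mul_sum]
    refine Finset.sum_congr rfl fun i _ => Finset.sum_congr rfl fun j _ => ?_
    by_cases h1 : ω ∈ A i <;> by_cases h2 : ω ∈ A j <;> simp [h1, h2]
  have hint2 : ∀ i ∈ s, ∀ j ∈ s, Integrable ((A i ∩ A j).indicator fun _ => (1 : ℝ)) P :=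
    fun i hi j hj => (integrable_const _).indicator ((hA i hi).inter (hA j hj))
  have hWint : Integrable W P := integrable_finsetSum _ hAint
  have hW2int : Integrable (fun ω => W ω ^ 2) P := by
    simp_rw [hprod]
    exact integrable_finsetSum _ fun i hi => integrable_finsetSum _ (hint2 i hi)
  have hE2 : ∫ ω, W ω ^ 2 ∂P ≤ s.card * p + s.card ^ 2 * (c * p + p ^ 2) := by
    simp_rw [hprod]
    rw [integral_finsetSum _ fun i hi => integrable_finsetSum _ (hint2 i hi)]
    have : ∀ i ∈ s, ∫ ω, ∑ j ∈ s, (A i ∩ A j).indicator (fun _ => (1 : ℝ)) ω ∂P ≤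
        p + s.card * (c * p + p ^ 2) := by
      intro i hi
      rw [integral_finsetSum _ (hint2 i hi), ← Finset.add_sum_erase _ _ hi]
      refine add_le_add ?_ ?_
      · rw [Set.inter_self, integral_indicator_const _ (hA i hi), hAp i hi]; simp
      · calc _ ≤ ∑ j ∈ s.erase i, (c * p + p ^ 2) := by
              refine Finset.sum_le_sum fun j hj => ?_
              have hj' := Finset.mem_of_mem_erase hj
              rw [integral_indicator_const _ ((hA i hi).inter (hA j hj'))]
              simpa using hAA i hi j hj' (Finset.ne_of_mem_erase hj).symm
          _ ≤ _ := by
              rw [Finset.sum_const, nsmul_eq_mul]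
              refine mul_le_mul_of_nonneg_right ?_ (by positivity)
              exact_mod_cast Finset.card_le_card (Finset.erase_subset _ _)
    refine (Finset.sum_le_sum this).trans (le_of_eq ?_)
    rw [Finset.sum_const, nsmul_eq_mul]; ring
  have hvar : ∫ ω, (W ω - s.card * p) ^ 2 ∂P ≤ s.card * p + s.card ^ 2 * (c * p) := by
    have : ∀ ω, (W ω - s.card * p) ^ 2 =
        W ω ^ 2 - 2 * (s.card * p) * W ω + (s.card * p) ^ 2 := fun ω => by ring
    simp_rw [this]
    have hi : Integrable (fun ω => W ω ^ 2 - 2 * (s.card * p) * W ω) P :=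
      hW2int.sub (hWint.const_mul _)
    rw [integral_add hi (integrable_const _),
      integral_sub hW2int (hWint.const_mul _), integral_const_mul, hE]
    simp
    nlinarith
  have hmark : (s.card * p) ^ 2 * P.real {ω | ∀ i ∈ s, ω ∉ A i} ≤
      ∫ ω, (W ω - s.card * p) ^ 2 ∂P := by
    have hint3 : Integrable (fun ω => (W ω - s.card * p) ^ 2) P := by
      have : (fun ω => (W ω - s.card * p) ^ 2) = fun ω =>
          W ω ^ 2 - 2 * (s.card * p) * W ω + (s.card * p) ^ 2 := by funext ω; ring
      rw [this]
      exact (hW2int.sub (hWint.const_mul _)).add (integrable_const _)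
    refine le_trans ?_ (mul_meas_ge_le_integral_of_nonneg (μ := P)
      (ae_of_all _ fun ω => sq_nonneg (W ω - s.card * p)) hint3 ((s.card * p) ^ 2))
    refine mul_le_mul_of_nonneg_left (measureReal_mono fun ω hω => ?_) (sq_nonneg _)
    have : W ω = 0 := Finset.sum_eq_zero fun i hi => by simp [hω i hi]
    simp [this]
  have hnp : 0 < s.card * p := mul_pos hn hp
  have : P.real {ω | ∀ i ∈ s, ω ∉ A i} ≤
      (s.card * p + s.card ^ 2 * (c * p)) / (s.card * p) ^ 2 := by
    rw [le_div_iff₀ (by positivity)]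
    linarith
  refine this.trans (le_of_eq ?_)
  field_simp

end Count

end RCM

namespace RCM

/-- Two mutually independent families that are independent of each other combine to one
mutually independent family. -/
lemma iIndep_sumElim {Ω ι κ : Type*} [mΩ : MeasurableSpace Ω] {P : Measure Ω}
    {m₁ : ι → MeasurableSpace Ω} {m₂ : κ → MeasurableSpace Ω} {F G : MeasurableSpace Ω}
    (h₁ : iIndep m₁ P) (h₂ : iIndep m₂ P) (hF : ∀ i, m₁ i ≤ F) (hG : ∀ k, m₂ k ≤ G)
    (hFG : Indep F G P) : iIndep (Sum.elim m₁ m₂) P := by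
  rw [iIndep_iff]
  intro s f hf
  have hs := Finset.toLeft_disjSum_toRight (u := s)
  have hl : ∀ i ∈ s.toLeft, MeasurableSet[m₁ i] (f (Sum.inl i)) := fun i hi =>
    hf _ (Finset.mem_toLeft.1 hi)
  have hr : ∀ k ∈ s.toRight, MeasurableSet[m₂ k] (f (Sum.inr k)) := fun k hk =>
    hf _ (Finset.mem_toRight.1 hk)
  have hinter : ⋂ x ∈ s, f x =
      (⋂ i ∈ s.toLeft, f (Sum.inl i)) ∩ ⋂ k ∈ s.toRight, f (Sum.inr k) := by
    ext ω
    simp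
  rw [hinter, (Indep_iff _ _ P).1 hFG _ _
      (Finset.measurableSet_biInter _ fun i hi => hF i _ (hl i hi))
      (Finset.measurableSet_biInter _ fun k hk => hG k _ (hr k hk)),
    h₁.meas_biInter hl, h₂.meas_biInter hr]
  conv_rhs => rw [← hs, Finset.prod_disjSum]

/-- Conditioning on one of two independent random variables. -/
lemma measure_prodMk_mem_eq_lintegral {Ω β γ : Type*} [MeasurableSpace Ω] [MeasurableSpace β]
    [MeasurableSpace γ] {P : Measure Ω} [IsProbabilityMeasure P] {V : Ω → β} {Z : Ω → γ}
    (hV : Measurable V) (hZ : Measurable Z) (h : IndepFun V Z P) {R : Set (β × γ)}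
    (hR : MeasurableSet R) :
    P {ω | (V ω, Z ω) ∈ R} = ∫⁻ v, P {ω | (v, Z ω) ∈ R} ∂(P.map V) := by
  have e : P {ω | (V ω, Z ω) ∈ R} = P.map (fun ω => (V ω, Z ω)) R := by
    rw [Measure.map_apply (hV.prodMk hZ) hR]; rfl
  have : IsProbabilityMeasure (P.map Z) := Measure.isProbabilityMeasure_map hZ.aemeasurable
  rw [e, (indepFun_iff_map_prod_eq_prod_map_map hV.aemeasurable hZ.aemeasurable).1 h,
    Measure.prod_apply hR]
  refine lintegral_congr fun v => ?_
  rw [Measure.map_apply hZ (measurable_prodMk_left hR)]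
  rfl

variable {d : ℕ} {Ω : Type*} [mΩ : MeasurableSpace Ω] {P : Measure Ω}

/-- The edge variable of the unordered pair `{i, j}`. -/
def edgeVar (M : Model d P) (i j : ℕ) (ω : Ω) : ℝ := M.U (min i j) (max i j) ω

/-- The variables attached to the vertex `j` as a possible neighbour of `i` and `i'`. -/
def starVar (M : Model d P) (i i' j : ℕ) (ω : Ω) : EuclideanSpace ℝ (Fin d) × ℝ × ℝ :=
  (M.X j ω, edgeVar M i j ω, edgeVar M i' j ω)

lemma measurable_edgeVar (M : Model d P) (i j : ℕ) : Measurable (edgeVar M i j) := M.U_meas _ _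

lemma measurable_starVar (M : Model d P) (i i' j : ℕ) : Measurable (starVar M i i' j) :=
  (M.X_meas j).prodMk ((measurable_edgeVar M i j).prodMk (measurable_edgeVar M i' j))

/-- The sigma-algebras generated by the vertex positions and by the edge variables. -/
abbrev sigmas (M : Model d P) :
    {i : ℕ // 1 ≤ i} ⊕ {p : ℕ × ℕ // 1 ≤ p.1 ∧ p.1 < p.2} → MeasurableSpace Ω :=
  Sum.elim (fun i => MeasurableSpace.comap (M.X i) inferInstance)
    (fun p => MeasurableSpace.comap (M.U p.1.1 p.1.2) inferInstance)

lemma iIndep_sigmas (M : Model d P) : iIndep (sigmas M) P := by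
  refine iIndep_sumElim M.X_indep M.U_indep ?_ ?_
    (M.families_indep.indep (i := 0) (j := 2) (by decide))
  · intro i
    have hm : Measurable fun x : ℕ → EuclideanSpace ℝ (Fin d) => x i := measurable_pi_apply _
    calc MeasurableSpace.comap (M.X i) inferInstance
        = MeasurableSpace.comap (fun ω (i : ℕ) => M.X i ω)
            (MeasurableSpace.comap (fun x => x i.1) inferInstance) := by
          rw [MeasurableSpace.comap_comp]; rfl
      _ ≤ _ := MeasurableSpace.comap_mono hm.comap_le
  · intro p
    have hm : Measurable fun x : ℕ × ℕ → ℝ => x p := measurable_pi_apply _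
    calc MeasurableSpace.comap (M.U p.1.1 p.1.2) inferInstance
        = MeasurableSpace.comap (fun ω (p : ℕ × ℕ) => M.U p.1 p.2 ω)
            (MeasurableSpace.comap (fun x => x p.1) inferInstance) := by
          rw [MeasurableSpace.comap_comp]; rfl
      _ ≤ _ := MeasurableSpace.comap_mono hm.comap_le

lemma sigmas_le (M : Model d P) (k) : sigmas M k ≤ mΩ := by
  rcases k with i | p
  · exact (M.X_meas i).comap_le
  · exact (M.U_meas _ _).comap_le

lemma comap_X_le (M : Model d P) {i : ℕ} (hi : 1 ≤ i)
    {S : Set ({i : ℕ // 1 ≤ i} ⊕ {p : ℕ × ℕ // 1 ≤ p.1 ∧ p.1 < p.2})}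
    (hS : Sum.inl ⟨i, hi⟩ ∈ S) :
    MeasurableSpace.comap (M.X i) inferInstance ≤ ⨆ k ∈ S, sigmas M k :=
  le_iSup₂ (f := fun k (_ : k ∈ S) => sigmas M k) (Sum.inl ⟨i, hi⟩) hS

/-- The index of the edge variable of `{i, j}`. -/
def pairIdx {i j : ℕ} (hi : 1 ≤ i) (hj : 1 ≤ j) (hij : i ≠ j) :
    {p : ℕ × ℕ // 1 ≤ p.1 ∧ p.1 < p.2} :=
  ⟨(min i j, max i j), by simp only; omega⟩

lemma comap_edgeVar_le (M : Model d P) {i j : ℕ} (hi : 1 ≤ i) (hj : 1 ≤ j) (hij : i ≠ j)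
    {S : Set ({i : ℕ // 1 ≤ i} ⊕ {p : ℕ × ℕ // 1 ≤ p.1 ∧ p.1 < p.2})}
    (hS : Sum.inr (pairIdx hi hj hij) ∈ S) :
    MeasurableSpace.comap (edgeVar M i j) inferInstance ≤ ⨆ k ∈ S, sigmas M k :=
  le_iSup₂ (f := fun k (_ : k ∈ S) => sigmas M k) (Sum.inr (pairIdx hi hj hij)) hS

/-- The indices of the variables entering `starVar M i i' j`. -/
def starIdx (i i' j : ℕ) : Set ({i : ℕ // 1 ≤ i} ⊕ {p : ℕ × ℕ // 1 ≤ p.1 ∧ p.1 < p.2}) :=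
  {k | Sum.elim (fun a => a.1 = j)
    (fun p => p.1 = (min i j, max i j) ∨ p.1 = (min i' j, max i' j)) k}

lemma comap_starVar_le (M : Model d P) {i i' j : ℕ} (hi : 1 ≤ i) (hi' : 1 ≤ i') (hj : 1 ≤ j)
    (hij : i ≠ j) (hij' : i' ≠ j) :
    MeasurableSpace.comap (starVar M i i' j) inferInstance ≤ ⨆ k ∈ starIdx i i' j, sigmas M k := by
  rw [← measurable_iff_comap_le]
  refine Measurable.prodMk ?_ (Measurable.prodMk ?_ ?_) <;> rw [measurable_iff_comap_le]
  · exact comap_X_le M hj (by simp [starIdx])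
  · exact comap_edgeVar_le M hi hj hij (by simp [starIdx, pairIdx])
  · exact comap_edgeVar_le M hi' hj hij' (by simp [starIdx, pairIdx])

lemma disjoint_starIdx {i i' j l : ℕ} (hjl : j ≠ l) (hij : i ≠ j) (hij' : i' ≠ j)
    (hil : i ≠ l) (hil' : i' ≠ l) :
    Disjoint (starIdx i i' j) (starIdx i i' l) := by
  rw [Set.disjoint_left]
  rintro (a | p) h1 h2
  · have e1 : a.1 = j := h1
    have e2 : a.1 = l := h2
    omega
  · have e1 : p.1 = (min i j, max i j) ∨ p.1 = (min i' j, max i' j) := h1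
    have e2 : p.1 = (min i l, max i l) ∨ p.1 = (min i' l, max i' l) := h2
    simp only [Prod.ext_iff] at e1 e2
    omega

variable {J : Finset ℕ} {i i' : ℕ}

/-- The variables attached to distinct neighbours of `i` and `i'` are independent. -/
lemma indep_starVar (M : Model d P) (hi : 1 ≤ i) (hi' : 1 ≤ i')
    (hJ : ∀ j ∈ J, 1 ≤ j ∧ i ≠ j ∧ i' ≠ j) (t : Finset J) (a : J) (ha : a ∉ t) :
    Indep (MeasurableSpace.comap (starVar M i i' a) inferInstance)
      (⨆ j ∈ (t : Set J), MeasurableSpace.comap (starVar M i i' j) inferInstance) P := by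
  have hd : Disjoint (starIdx i i' a) (⋃ j ∈ t, starIdx i i' (j : ℕ)) := by
    simp only [Set.disjoint_iUnion_right]
    intro j hj
    refine disjoint_starIdx (fun h => ha ?_) (hJ a a.2).2.1 (hJ a a.2).2.2 (hJ j j.2).2.1
      (hJ j j.2).2.2
    rwa [Subtype.ext h]
  refine indep_of_indep_of_le (indep_iSup_of_disjoint (sigmas_le M) (iIndep_sigmas M) hd) ?_ ?_
  · exact comap_starVar_le M hi hi' (hJ a a.2).1 (hJ a a.2).2.1 (hJ a a.2).2.2
  · refine iSup₂_le fun j hj => ?_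
    refine (comap_starVar_le M hi hi' (hJ j j.2).1 (hJ j j.2).2.1 (hJ j j.2).2.2).trans ?_
    exact biSup_mono fun k hk => Set.mem_biUnion (x := j) (by simpa using hj) hk

/-- The positions of `i` and `i'` are independent of the variables attached to their possible
neighbours. -/
lemma indepFun_centers_starVar (M : Model d P) (hi : 1 ≤ i) (hi' : 1 ≤ i')
    (hJ : ∀ j ∈ J, 1 ≤ j ∧ i ≠ j ∧ i' ≠ j) :
    IndepFun (fun ω => (M.X i ω, M.X i' ω)) (fun ω (j : J) => starVar M i i' j ω) P := by
  have hd : Disjoint ({Sum.inl ⟨i, hi⟩, Sum.inl ⟨i', hi'⟩} :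
      Set ({i : ℕ // 1 ≤ i} ⊕ {p : ℕ × ℕ // 1 ≤ p.1 ∧ p.1 < p.2}))
      (⋃ j ∈ J, starIdx i i' j) := by
    rw [Set.disjoint_iUnion₂_right]
    intro j hj
    have := hJ j hj
    rw [Set.disjoint_left]
    rintro _ (rfl | rfl) h
    · exact this.2.1 h
    · exact this.2.2 h
  rw [IndepFun_iff_Indep]
  refine indep_of_indep_of_le (indep_iSup_of_disjoint (sigmas_le M) (iIndep_sigmas M) hd) ?_ ?_
  · rw [← measurable_iff_comap_le]
    refine Measurable.prodMk ?_ ?_ <;> rw [measurable_iff_comap_le]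
    · exact comap_X_le M hi (by simp)
    · exact comap_X_le M hi' (by simp)
  · rw [← measurable_iff_comap_le]
    refine @measurable_pi_lambda _ _ _ (_) _ _ fun j => ?_
    rw [measurable_iff_comap_le]
    refine (comap_starVar_le M hi hi' (hJ j j.2).1 (hJ j j.2).2.1 (hJ j j.2).2.2).trans ?_
    exact biSup_mono fun k hk => Set.mem_biUnion (x := (j : ℕ)) (by simp) hk

lemma indepFun_X_edgeVar (M : Model d P) {j : ℕ} (hi : 1 ≤ i) (hj : 1 ≤ j) (hij : i ≠ j) :
    IndepFun (M.X j) (edgeVar M i j) P := by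
  rw [IndepFun_iff_Indep]
  exact (iIndep_sigmas M).indep (i := Sum.inl ⟨j, hj⟩) (j := Sum.inr (pairIdx hi hj hij))
    (by simp)

lemma indepFun_X_X (M : Model d P) (hi : 1 ≤ i) (hi' : 1 ≤ i') (hii : i ≠ i') :
    IndepFun (M.X i) (M.X i') P :=
  M.X_indep.indepFun (i := ⟨i, hi⟩) (j := ⟨i', hi'⟩) (by simpa using hii)

lemma map_edgeVar (M : Model d P) {j : ℕ} (hi : 1 ≤ i) (hj : 1 ≤ j) (hij : i ≠ j) :
    P.map (edgeVar M i j) = volume.restrict (Set.Icc (0 : ℝ) 1) :=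
  M.U_unif _ _ (pairIdx hi hj hij).2.1 (pairIdx hi hj hij).2.2

end RCM

namespace RCM

lemma measurable_torusDist_comp {d : ℕ} {β : Type*} [MeasurableSpace β]
    {f h : β → EuclideanSpace ℝ (Fin d)} (hf : Measurable f) (hh : Measurable h) :
    Measurable fun b => torusDist (f b) (h b) := by
  have h1 := (measurable_torusDist (d := d)).comp (hf.prodMk hh)
  exact h1

lemma count_subtype {Ω : Type*} (A : ℕ → Set Ω) (J : Finset ℕ) (ω : Ω) :
    count (fun j : J => A j) Finset.univ ω = count A J ω := by
  classical
  simp only [count]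
  rw [← Finset.card_map (Function.Embedding.subtype _)]
  congr 1
  ext j
  simp [and_comm]

variable {d : ℕ} {Ω : Type*} [mΩ : MeasurableSpace Ω] {P : Measure Ω}

/-- The connection function extended to the whole line as a monotone function. -/
def gExt (M : Model d P) (t : ℝ) : ℝ := M.g (max t 0)

lemma gExt_of_nonneg (M : Model d P) {t : ℝ} (ht : 0 ≤ t) : gExt M t = M.g t := by
  simp [gExt, ht]

lemma gExt_antitone (M : Model d P) : Antitone (gExt M) := fun _ _ hab =>
  M.g_antitone (mem_Ici.2 (le_max_right _ _)) (mem_Ici.2 (le_max_right _ _))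
    (max_le_max hab le_rfl)

lemma gExt_le_one (M : Model d P) (t : ℝ) : gExt M t ≤ 1 := (M.g_mem _ (le_max_right _ _)).2

/-- The triples (position, position, edge variable) for which there is an edge at scale `r` whose
length belongs to `B`. -/
def linked (M : Model d P) (r : ℝ) (B : Set ℝ) :
    Set (EuclideanSpace ℝ (Fin d) × EuclideanSpace ℝ (Fin d) × ℝ) :=
  {p | p.2.2 ≤ gExt M (torusDist p.1 p.2.1 / r) ∧ torusDist p.1 p.2.1 ∈ B}

/-- The event that `i` and `j` are joined at scale `r` by an edge of length in `B`. -/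
def linkEvent (M : Model d P) (r : ℝ) (B : Set ℝ) (i j : ℕ) : Set Ω :=
  {ω | (M.X i ω, M.X j ω, edgeVar M i j ω) ∈ linked M r B}

/-- The probability that two given vertices are joined at scale `r` by an edge of length
in `B`. -/
def edgeProb (M : Model d P) (r : ℝ) (B : Set ℝ) : ℝ :=
  (∫⁻ y in cube d, B.indicator (fun s => ENNReal.ofReal (gExt M (s / r))) ‖y‖).toReal

variable (M : Model d P) {r : ℝ} {B : Set ℝ} {i i' : ℕ} {J : Finset ℕ}

lemma measurableSet_linked (hB : MeasurableSet B) : MeasurableSet (linked M r B) := by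
  have hdist : Measurable fun p : EuclideanSpace ℝ (Fin d) × EuclideanSpace ℝ (Fin d) × ℝ =>
      torusDist p.1 p.2.1 :=
    measurable_torusDist_comp measurable_fst (measurable_fst.comp measurable_snd)
  exact (measurableSet_le (measurable_snd.comp measurable_snd)
    ((gExt_antitone M).measurable.comp (hdist.div_const r))).inter (hdist hB)

lemma measurableSet_linkEvent (hB : MeasurableSet B) (i j : ℕ) :
    MeasurableSet (linkEvent M r B i j) :=
  ((M.X_meas i).prodMk ((M.X_meas j).prodMk (measurable_edgeVar M i j)))
    (measurableSet_linked M hB)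

lemma measure_edgeVar_le {j : ℕ} (hi : 1 ≤ i) (hj : 1 ≤ j) (hij : i ≠ j) {a : ℝ}
    (h1 : a ≤ 1) : P {ω | edgeVar M i j ω ≤ a} = ENNReal.ofReal a := by
  have : P {ω | edgeVar M i j ω ≤ a} = P.map (edgeVar M i j) (Iic a) := by
    rw [Measure.map_apply (measurable_edgeVar M i j) measurableSet_Iic]; rfl
  rw [this, map_edgeVar M hi hj hij, Measure.restrict_apply measurableSet_Iic]
  have : Iic a ∩ Icc 0 1 = Icc 0 a := by
    ext t; simp only [mem_inter_iff, mem_Iic, mem_Icc]; constructor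
    · rintro ⟨h, h', _⟩; exact ⟨h', h⟩
    · rintro ⟨h, h'⟩; exact ⟨h', h, h'.trans h1⟩
  simp [this]

lemma edgeProb_nonneg : 0 ≤ edgeProb M r B := ENNReal.toReal_nonneg

variable [IsProbabilityMeasure P]

/-- Given the position of one end, the probability of an edge does not depend on it. -/
lemma measureReal_linked {j : ℕ} (hi : 1 ≤ i) (hj : 1 ≤ j) (hij : i ≠ j) (hB : MeasurableSet B)
    (x : EuclideanSpace ℝ (Fin d)) :
    P.real {ω | (x, M.X j ω, edgeVar M i j ω) ∈ linked M r B} = edgeProb M r B := by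
  have hR : MeasurableSet {p : EuclideanSpace ℝ (Fin d) × ℝ | (x, p) ∈ linked M r B} :=
    measurable_prodMk_left (measurableSet_linked M hB)
  have hF : Measurable (B.indicator fun s => ENNReal.ofReal (gExt M (s / r))) :=
    (ENNReal.measurable_ofReal.comp
      ((gExt_antitone M).measurable.comp (measurable_id.div_const r))).indicator hB
  rw [Measure.real, edgeProb, ← lintegral_cube_torusDist x hF, ← M.X_unif j hj]
  congr 1
  refine (measure_prodMk_mem_eq_lintegral (M.X_meas j) (measurable_edgeVar M i j)
    (indepFun_X_edgeVar M hi hj hij) hR).trans (lintegral_congr fun y => ?_)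
  by_cases hy : torusDist x y ∈ B
  · simp only [linked, Set.mem_ofPred_eq, hy, and_true, Set.indicator_of_mem]
    exact measure_edgeVar_le M hi hj hij (gExt_le_one M _)
  · simp [linked, hy]

/-- The volume of the cube is one. -/
lemma volume_cube (M : Model d P) : volume (cube d) = 1 := by
  have h := M.X_unif 1 le_rfl
  have : P.map (M.X 1) univ = 1 := by
    rw [Measure.map_apply (M.X_meas 1) MeasurableSet.univ]; simp
  rw [h] at this
  simpa using this

lemma edgeProb_le_one : edgeProb M r B ≤ 1 := by
  refine ENNReal.toReal_le_of_le_ofReal zero_le_one ?_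
  calc _ ≤ ∫⁻ _ in cube d, (1 : ENNReal) := by
        refine lintegral_mono fun y => ?_
        by_cases hy : ‖y‖ ∈ B
        · simpa [hy] using gExt_le_one M _
        · simp [hy]
    _ = _ := by simp [volume_cube M]

/-- The edges from `i` to a given set of vertices form a binomial number. -/
lemma measureReal_le_count_linkEvent (hi : 1 ≤ i) (hJ : ∀ j ∈ J, 1 ≤ j ∧ i ≠ j)
    (hB : MeasurableSet B) (k : ℕ) :
    P.real {ω | k ≤ count (linkEvent M r B i) J ω} = binTail (edgeProb M r B) J.card k := by
  have hJ' : ∀ j ∈ J, 1 ≤ j ∧ i ≠ j ∧ i ≠ j := fun j hj => ⟨(hJ j hj).1, (hJ j hj).2, (hJ j hj).2⟩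
  set A : J → Set ((EuclideanSpace ℝ (Fin d) × EuclideanSpace ℝ (Fin d)) ×
      (J → EuclideanSpace ℝ (Fin d) × ℝ × ℝ)) :=
    fun j => {w | (w.1.1, (w.2 j).1, (w.2 j).2.1) ∈ linked M r B} with hA
  have hAm : ∀ j, MeasurableSet (A j) := fun j => by
    refine (measurableSet_linked M hB).preimage ?_
    fun_prop
  have hsec : ∀ v, P {ω | (v, fun j : J => starVar M i i j ω) ∈
      {w | k ≤ count A Finset.univ w}} = ENNReal.ofReal (binTail (edgeProb M r B) J.card k) := by
    intro v
    have h := measureReal_le_count (P := P) (s := (Finset.univ : Finset J))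
      (m := fun j : J => MeasurableSpace.comap (starVar M i i j) inferInstance)
      (A := fun j => {ω | (v.1, M.X j ω, edgeVar M i j ω) ∈ linked M r B})
      (q := edgeProb M r B)
      (fun j => (measurable_starVar M i i j).comap_le) (indep_starVar M hi hi hJ')
      (fun j _ => ⟨{z | (v.1, z.1, z.2.1) ∈ linked M r B},
        (measurableSet_linked M hB).preimage (by fun_prop), rfl⟩)
      (fun j _ => measureReal_linked M hi (hJ j j.2).1 (hJ j j.2).2 hB _) k
    rw [Finset.card_univ, Fintype.card_coe] at h
    rw [← h, ofReal_measureReal]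
    rfl
  have key := measure_prodMk_mem_eq_lintegral
    (V := fun ω => (M.X i ω, M.X i ω)) (Z := fun ω (j : J) => starVar M i i j ω)
    ((M.X_meas i).prodMk (M.X_meas i))
    (measurable_pi_lambda _ fun j => measurable_starVar M i i j)
    (indepFun_centers_starVar M hi hi hJ') (measurableSet_le_count (fun j _ => hAm j) k)
    (R := {w | k ≤ count A Finset.univ w})
  have : IsProbabilityMeasure (P.map fun ω => (M.X i ω, M.X i ω)) :=
    Measure.isProbabilityMeasure_map ((M.X_meas i).prodMk (M.X_meas i)).aemeasurable
  simp_rw [hsec, lintegral_const, measure_univ, mul_one] at key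
  have e : {ω | k ≤ count (linkEvent M r B i) J ω} = {ω | ((M.X i ω, M.X i ω),
      fun j : J => starVar M i i j ω) ∈ {w | k ≤ count A Finset.univ w}} := by
    ext ω
    rw [Set.mem_ofPred_eq, ← count_subtype]
    rfl
  rw [Measure.real, e, key,
    ENNReal.toReal_ofReal (binTail_nonneg (edgeProb_nonneg M) (edgeProb_le_one M) _ _)]

lemma measure_torusDist_le (hi : 1 ≤ i) (hi' : 1 ≤ i') (hii : i ≠ i') (ρ : ℝ) :
    P {ω | torusDist (M.X i ω) (M.X i' ω) ≤ ρ} ≤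
      volume (Metric.closedBall (0 : EuclideanSpace ℝ (Fin d)) ρ) := by
  have hR : MeasurableSet {p : EuclideanSpace ℝ (Fin d) × EuclideanSpace ℝ (Fin d) |
      torusDist p.1 p.2 ≤ ρ} := measurable_torusDist measurableSet_Iic
  have hF : Measurable ((Iic ρ).indicator fun _ : ℝ => (1 : ENNReal)) :=
    measurable_const.indicator measurableSet_Iic
  have hsec : ∀ x, P {ω | torusDist x (M.X i' ω) ≤ ρ} ≤
      volume (Metric.closedBall (0 : EuclideanSpace ℝ (Fin d)) ρ) := by
    intro x
    have hm : Measurable fun y => torusDist x y :=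
      measurable_torusDist_comp measurable_const measurable_id
    calc P {ω | torusDist x (M.X i' ω) ≤ ρ}
        = P.map (M.X i') ((fun y => torusDist x y) ⁻¹' Iic ρ) := by
          rw [Measure.map_apply (M.X_meas i') (hm measurableSet_Iic)]; rfl
      _ = ∫⁻ y in cube d, (Iic ρ).indicator (fun _ => (1 : ENNReal)) (torusDist x y) := by
          rw [M.X_unif i' hi', ← lintegral_indicator_one (hm measurableSet_Iic)]; rfl
      _ = ∫⁻ y in cube d, (Iic ρ).indicator (fun _ => (1 : ENNReal)) ‖y‖ :=
          lintegral_cube_torusDist x hF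
      _ ≤ ∫⁻ y : EuclideanSpace ℝ (Fin d), (Iic ρ).indicator (fun _ => (1 : ENNReal)) ‖y‖ :=
          setLIntegral_le_lintegral _ _
      _ = ∫⁻ y : EuclideanSpace ℝ (Fin d), (Metric.closedBall 0 ρ).indicator 1 y := by
          refine lintegral_congr fun y => ?_
          by_cases hy : ‖y‖ ≤ ρ <;> simp [hy]
      _ = _ := lintegral_indicator_one Metric.isClosed_closedBall.measurableSet
  have : IsProbabilityMeasure (P.map (M.X i)) :=
    Measure.isProbabilityMeasure_map (M.X_meas i).aemeasurable
  calc _ = ∫⁻ x, P {ω | torusDist x (M.X i' ω) ≤ ρ} ∂(P.map (M.X i)) :=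
        measure_prodMk_mem_eq_lintegral (M.X_meas i) (M.X_meas i') (indepFun_X_X M hi hi' hii) hR
    _ ≤ ∫⁻ _, volume (Metric.closedBall (0 : EuclideanSpace ℝ (Fin d)) ρ) ∂(P.map (M.X i)) :=
        lintegral_mono hsec
    _ = _ := by simp

/-- Large numbers of short edges at two vertices are almost independent events. -/
lemma measureReal_le_count_linkEvent_inter_le {ρ : ℝ} (hi : 1 ≤ i) (hi' : 1 ≤ i') (hii : i ≠ i')
    (hJ : ∀ j ∈ J, 1 ≤ j ∧ i ≠ j ∧ i' ≠ j) (k : ℕ) :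
    P.real ({ω | k ≤ count (linkEvent M r (Iic ρ) i) J ω} ∩
        {ω | k ≤ count (linkEvent M r (Iic ρ) i') J ω}) ≤
      volume.real (Metric.closedBall (0 : EuclideanSpace ℝ (Fin d)) (2 * ρ)) *
        binTail (edgeProb M r (Iic ρ)) J.card k + binTail (edgeProb M r (Iic ρ)) J.card k ^ 2 := by
  set p := binTail (edgeProb M r (Iic ρ)) J.card k with hp
  have hp0 : 0 ≤ p := binTail_nonneg (edgeProb_nonneg M) (edgeProb_le_one M) _ _
  have hB : MeasurableSet (Iic ρ) := measurableSet_Iic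
  set A : J → Set ((EuclideanSpace ℝ (Fin d) × EuclideanSpace ℝ (Fin d)) ×
      (J → EuclideanSpace ℝ (Fin d) × ℝ × ℝ)) :=
    fun j => {w | (w.1.1, (w.2 j).1, (w.2 j).2.1) ∈ linked M r (Iic ρ)} with hA
  set A' : J → Set ((EuclideanSpace ℝ (Fin d) × EuclideanSpace ℝ (Fin d)) ×
      (J → EuclideanSpace ℝ (Fin d) × ℝ × ℝ)) :=
    fun j => {w | (w.1.2, (w.2 j).1, (w.2 j).2.2) ∈ linked M r (Iic ρ)} with hA'
  have hAm : ∀ j, MeasurableSet (A j) := fun j => by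
    refine (measurableSet_linked M hB).preimage ?_
    fun_prop
  have hAm' : ∀ j, MeasurableSet (A' j) := fun j => by
    refine (measurableSet_linked M hB).preimage ?_
    fun_prop
  set R := {w | k ≤ count A Finset.univ w} ∩ {w | k ≤ count A' Finset.univ w} with hRdef
  have hR : MeasurableSet R := (measurableSet_le_count (fun j _ => hAm j) k).inter
    (measurableSet_le_count (fun j _ => hAm' j) k)
  set close := {v : EuclideanSpace ℝ (Fin d) × EuclideanSpace ℝ (Fin d) |
    torusDist v.1 v.2 ≤ 2 * ρ} with hclose
  have hclosem : MeasurableSet close := measurable_torusDist measurableSet_Iic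
  have hVm : Measurable fun ω => (M.X i ω, M.X i' ω) := (M.X_meas i).prodMk (M.X_meas i')
  have hle : ∀ j : J, MeasurableSpace.comap (starVar M i i' j) inferInstance ≤ mΩ :=
    fun j => (measurable_starVar M i i' j).comap_le
  have hmeasA : ∀ x, ∀ j : J, MeasurableSet[MeasurableSpace.comap (starVar M i i' j) inferInstance]
      {ω | (x, M.X j ω, edgeVar M i j ω) ∈ linked M r (Iic ρ)} := by
    intro x j
    refine ⟨{z | (x, z.1, z.2.1) ∈ linked M r (Iic ρ)}, ?_, rfl⟩
    refine (measurableSet_linked M hB).preimage ?_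
    fun_prop
  have hmeasA' : ∀ x, ∀ j : J, MeasurableSet[MeasurableSpace.comap (starVar M i i' j) inferInstance]
      {ω | (x, M.X j ω, edgeVar M i' j ω) ∈ linked M r (Iic ρ)} := by
    intro x j
    refine ⟨{z | (x, z.1, z.2.2) ∈ linked M r (Iic ρ)}, ?_, rfl⟩
    refine (measurableSet_linked M hB).preimage ?_
    fun_prop
  have hsec : ∀ v, P {ω | (v, fun j : J => starVar M i i' j ω) ∈ R} ≤
      close.indicator (fun _ => ENNReal.ofReal p) v + ENNReal.ofReal (p ^ 2) := by
    intro v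
    by_cases hv : v ∈ close
    · rw [Set.indicator_of_mem hv]
      refine le_trans ?_ le_self_add
      have h := measureReal_le_count (P := P) (s := (Finset.univ : Finset J))
        (m := fun j : J => MeasurableSpace.comap (starVar M i i' j) inferInstance)
        (A := fun j => {ω | (v.1, M.X j ω, edgeVar M i j ω) ∈ linked M r (Iic ρ)})
        (q := edgeProb M r (Iic ρ))
        hle (indep_starVar M hi hi' hJ) (fun j _ => hmeasA v.1 j)
        (fun j _ => measureReal_linked M hi (hJ j j.2).1 (hJ j j.2).2.1 hB _) k
      rw [Finset.card_univ, Fintype.card_coe] at h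
      rw [hp, ← h, ofReal_measureReal]
      exact measure_mono fun ω hω => hω.1
    · rw [Set.indicator_of_notMem hv, zero_add]
      have h := measureReal_le_count_inter_le (P := P) (s := (Finset.univ : Finset J))
        (m := fun j : J => MeasurableSpace.comap (starVar M i i' j) inferInstance)
        (A := fun j => {ω | (v.1, M.X j ω, edgeVar M i j ω) ∈ linked M r (Iic ρ)})
        (B := fun j => {ω | (v.2, M.X j ω, edgeVar M i' j ω) ∈ linked M r (Iic ρ)})
        (edgeProb_nonneg M) (edgeProb_le_one M)
        hle (indep_starVar M hi hi' hJ) (fun j _ => hmeasA v.1 j)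
        (fun j _ => measureReal_linked M hi (hJ j j.2).1 (hJ j j.2).2.1 hB _)
        (fun j _ => hmeasA' v.2 j)
        (fun j _ => measureReal_linked M hi' (hJ j j.2).1 (hJ j j.2).2.2 hB _)
        (fun j _ => by
          refine Set.disjoint_left.2 fun ω h1 h2 => hv ?_
          have h1' : torusDist v.1 (M.X j ω) ≤ ρ := h1.2
          have h2' : torusDist v.2 (M.X j ω) ≤ ρ := h2.2
          have := torusDist_le_add v.1 v.2 (M.X j ω)
          show torusDist v.1 v.2 ≤ 2 * ρ
          linarith) k k
      rw [Finset.card_univ, Fintype.card_coe, ← hp, ← sq] at h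
      refine le_trans (le_of_eq ?_) (ENNReal.ofReal_le_ofReal h)
      rw [ofReal_measureReal]
      rfl
  have key := measure_prodMk_mem_eq_lintegral (Z := fun ω (j : J) => starVar M i i' j ω) hVm
    (measurable_pi_lambda _ fun j => measurable_starVar M i i' j)
    (indepFun_centers_starVar M hi hi' hJ) hR
  have hprob : IsProbabilityMeasure (P.map fun ω => (M.X i ω, M.X i' ω)) :=
    Measure.isProbabilityMeasure_map hVm.aemeasurable
  have hbound : P {ω | ((M.X i ω, M.X i' ω), fun j : J => starVar M i i' j ω) ∈ R} ≤
      ENNReal.ofReal p * volume (Metric.closedBall (0 : EuclideanSpace ℝ (Fin d)) (2 * ρ)) +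
        ENNReal.ofReal (p ^ 2) := by
    rw [key]
    refine (lintegral_mono hsec).trans ?_
    rw [lintegral_add_right _ measurable_const, lintegral_indicator_const hclosem,
      lintegral_const, measure_univ, mul_one, Measure.map_apply hVm hclosem]
    gcongr
    exact measure_torusDist_le M hi hi' hii _
  have e : {ω | k ≤ count (linkEvent M r (Iic ρ) i) J ω} ∩
      {ω | k ≤ count (linkEvent M r (Iic ρ) i') J ω} =
      {ω | ((M.X i ω, M.X i' ω), fun j : J => starVar M i i' j ω) ∈ R} := by
    ext ω
    rw [Set.mem_inter_iff, Set.mem_ofPred_eq, Set.mem_ofPred_eq, ← count_subtype, ← count_subtype]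
    rfl
  have hfin : volume (Metric.closedBall (0 : EuclideanSpace ℝ (Fin d)) (2 * ρ)) ≠ ⊤ :=
    measure_closedBall_lt_top.ne
  rw [Measure.real, e]
  refine (ENNReal.toReal_mono (by finiteness) hbound).trans (le_of_eq ?_)
  rw [ENNReal.toReal_add (by finiteness) (by finiteness), ENNReal.toReal_mul,
    ENNReal.toReal_ofReal hp0, ENNReal.toReal_ofReal (sq_nonneg p), Measure.real, mul_comm]

end RCM

namespace RCM

variable {d : ℕ} {Ω : Type*} [mΩ : MeasurableSpace Ω] {P : Measure Ω}

/-- The integral of the connection function over a ball. -/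
def truncIntegral (M : Model d P) (K : ℝ) : ℝ :=
  ∫ y in Metric.closedBall (0 : EuclideanSpace ℝ (Fin d)) K, M.g ‖y‖

lemma tendsto_truncIntegral (M : Model d P) :
    Tendsto (fun K : ℕ => truncIntegral M K) atTop (nhds M.α) := by
  have h := tendsto_setIntegral_of_monotone (μ := volume)
    (s := fun K : ℕ => Metric.closedBall (0 : EuclideanSpace ℝ (Fin d)) K)
    (f := fun y => M.g ‖y‖) (fun K => Metric.isClosed_closedBall.measurableSet)
    (fun K L h => Metric.closedBall_subset_closedBall (by exact_mod_cast h))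
    M.g_integrable.integrableOn
  have hU : ⋃ K : ℕ, Metric.closedBall (0 : EuclideanSpace ℝ (Fin d)) K = univ := by
    refine eq_univ_of_forall fun x => ?_
    obtain ⟨K, hK⟩ := exists_nat_ge ‖x‖
    exact mem_iUnion.2 ⟨K, by simpa using hK⟩
  rw [hU, setIntegral_univ, ← M.α_def] at h
  exact h

lemma g_norm_nonneg (M : Model d P) (y : EuclideanSpace ℝ (Fin d)) : 0 ≤ M.g ‖y‖ :=
  (M.g_mem _ (norm_nonneg y)).1

lemma truncIntegral_le (M : Model d P) (K : ℝ) : truncIntegral M K ≤ M.α := by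
  rw [M.α_def]
  exact setIntegral_le_integral M.g_integrable (Eventually.of_forall (g_norm_nonneg M))

/-- Scaling of the integral of a nonnegative function. -/
lemma toReal_lintegral_inv_smul {f : EuclideanSpace ℝ (Fin d) → ℝ} (hf : Integrable f)
    (h0 : ∀ y, 0 ≤ f y) {r : ℝ} (hr : 0 < r) :
    ∫⁻ y, ENNReal.ofReal (f (r⁻¹ • y)) = ENNReal.ofReal (r ^ d * ∫ y, f y) := by
  rw [← ofReal_integral_eq_lintegral_ofReal (hf.comp_smul (inv_ne_zero hr.ne'))
    (Eventually.of_forall fun y => h0 _), Measure.integral_comp_inv_smul]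
  simp [abs_of_pos (pow_pos hr d)]

lemma gExt_norm_div (M : Model d P) {r : ℝ} (hr : 0 < r) (y : EuclideanSpace ℝ (Fin d)) :
    gExt M (‖y‖ / r) = M.g ‖r⁻¹ • y‖ := by
  rw [gExt_of_nonneg M (by positivity), norm_smul, norm_inv, Real.norm_of_nonneg hr.le,
    div_eq_inv_mul]

lemma edgeProb_univ_le (M : Model d P) {r : ℝ} (hr : 0 < r) :
    edgeProb M r univ ≤ r ^ d * M.α := by
  have := M.α_pos
  refine ENNReal.toReal_le_of_le_ofReal (by positivity) ?_
  rw [M.α_def, ← toReal_lintegral_inv_smul M.g_integrable (g_norm_nonneg M) hr]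
  refine (setLIntegral_le_lintegral _ _).trans (le_of_eq (lintegral_congr fun y => ?_))
  rw [Set.indicator_univ, gExt_norm_div M hr]

lemma closedBall_subset_cube {ρ : ℝ} (hρ : ρ < 1 / 2) :
    Metric.closedBall (0 : EuclideanSpace ℝ (Fin d)) ρ ⊆ cube d := by
  intro y hy i
  rw [mem_closedBall_zero_iff] at hy
  have h1 := (abs_le.1 ((Real.norm_eq_abs _ ▸ PiLp.norm_apply_le y i).trans hy))
  exact ⟨by linarith [h1.1], by linarith [h1.2]⟩

lemma edgeProb_Iic (M : Model d P) {r K : ℝ} (hr : 0 < r) (hK : K * r < 1 / 2) :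
    edgeProb M r (Iic (K * r)) = r ^ d * truncIntegral M K := by
  have hm : MeasurableSet (Metric.closedBall (0 : EuclideanSpace ℝ (Fin d)) K) :=
    Metric.isClosed_closedBall.measurableSet
  have h := toReal_lintegral_inv_smul (d := d)
    (f := (Metric.closedBall (0 : EuclideanSpace ℝ (Fin d)) K).indicator fun y => M.g ‖y‖)
    (M.g_integrable.indicator hm) (Set.indicator_nonneg fun y _ => g_norm_nonneg M y) hr
  rw [integral_indicator hm] at h
  have h0 : 0 ≤ truncIntegral M K := setIntegral_nonneg hm fun y _ => g_norm_nonneg M y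
  rw [edgeProb, ← ENNReal.toReal_ofReal (r := r ^ d * truncIntegral M K) (by positivity),
    truncIntegral, ← h]
  congr 1
  rw [← lintegral_indicator (measurableSet_cube d)]
  refine lintegral_congr fun y => ?_
  have hiff : r⁻¹ • y ∈ Metric.closedBall (0 : EuclideanSpace ℝ (Fin d)) K ↔ ‖y‖ ≤ K * r := by
    rw [mem_closedBall_zero_iff, norm_smul, norm_inv, Real.norm_of_nonneg hr.le,
      inv_mul_le_iff₀ hr, mul_comm]
  by_cases hy : ‖y‖ ≤ K * r
  · rw [Set.indicator_of_mem (closedBall_subset_cube hK (by simpa using hy)),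
      Set.indicator_of_mem (by simpa using hy), Set.indicator_of_mem (hiff.2 hy),
      gExt_norm_div M hr]
  · rw [Set.indicator_of_notMem (s := Metric.closedBall (0 : EuclideanSpace ℝ (Fin d)) K)
      (fun h => hy (hiff.1 h)), ENNReal.ofReal_zero]
    by_cases hc : y ∈ cube d
    · rw [Set.indicator_of_mem hc, Set.indicator_of_notMem (by simpa using hy)]
    · rw [Set.indicator_of_notMem hc]

/-- The volume of a ball scales with the dimension. -/
lemma volume_closedBall_eq {ρ : ℝ} (hρ : 0 ≤ ρ) :
    volume.real (Metric.closedBall (0 : EuclideanSpace ℝ (Fin d)) ρ) =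
      ρ ^ d * volume.real (Metric.closedBall (0 : EuclideanSpace ℝ (Fin d)) 1) := by
  rw [Measure.real, Measure.addHaar_closedBall _ _ hρ, Measure.real,
    Measure.addHaar_closedBall _ _ zero_le_one]
  simp [ENNReal.toReal_mul, hρ]

variable (M : Model d P) {γ : ℝ}

lemma rhat_pow (hd : d ≠ 0) (hγ : 0 < γ) (n : ℕ) :
    rhat M γ n ^ d = γ * Real.log n / (M.α * n) := by
  have := M.α_pos
  have := Real.log_natCast_nonneg n
  rw [rhat, one_div, Real.rpow_inv_natCast_pow (by positivity) hd]

lemma rhat_pos (hγ : 0 < γ) {n : ℕ} (hn : 2 ≤ n) : 0 < rhat M γ n := by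
  have := M.α_pos
  have : 0 < Real.log n := Real.log_pos (by exact_mod_cast hn)
  have : (0 : ℝ) < n := by positivity
  exact Real.rpow_pos_of_pos (by positivity) _

lemma rhat_nonneg (hγ : 0 < γ) (n : ℕ) : 0 ≤ rhat M γ n := by
  have := M.α_pos
  have := Real.log_natCast_nonneg n
  exact Real.rpow_nonneg (by positivity) _

lemma rhat_anti (hγ : 0 < γ) {n m : ℕ} (hn : 3 ≤ n) (hnm : n ≤ m) : rhat M γ m ≤ rhat M γ n := by
  have hα := M.α_pos
  have := Real.log_natCast_nonneg m
  have h3 : Real.exp 1 ≤ n := by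
    have : (3 : ℝ) ≤ n := by exact_mod_cast hn
    linarith [Real.exp_one_lt_d9]
  have hnm' : (n : ℝ) ≤ m := by exact_mod_cast hnm
  have h := Real.log_div_self_antitoneOn (mem_ofPred_eq ▸ h3 : (n : ℝ) ∈ {x | Real.exp 1 ≤ x})
    (h3.trans hnm') hnm'
  refine Real.rpow_le_rpow (by positivity) ?_ (by positivity)
  rw [mul_div_mul_comm, mul_div_mul_comm]
  exact mul_le_mul_of_nonneg_left h (by positivity)

lemma tendsto_log_div_nat : Tendsto (fun n : ℕ => Real.log n / n) atTop (nhds 0) := by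
  have := (Real.isLittleO_log_id_atTop.tendsto_div_nhds_zero).comp tendsto_natCast_atTop_atTop
  exact this

lemma tendsto_rhat (hd : d ≠ 0) : Tendsto (rhat M γ) atTop (nhds 0) := by
  have h : Tendsto (fun n : ℕ => γ * Real.log n / (M.α * n)) atTop (nhds 0) := by
    have := tendsto_log_div_nat.const_mul (γ / M.α)
    rw [mul_zero] at this
    exact this.congr fun n => by rw [mul_div_mul_comm]
  have := h.rpow_const (p := (1 : ℝ) / d) (Or.inr (by positivity))
  rwa [Real.zero_rpow (by positivity)] at this

end RCM

namespace RCM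

lemma H_strictMonoOn : StrictMonoOn H (Ici 1) := by
  refine strictMonoOn_of_deriv_pos (convex_Ici 1) ?_ fun x hx => ?_
  · unfold H
    refine ContinuousOn.add (by fun_prop) (continuousOn_id.mul ?_)
    exact Real.continuousOn_log.mono fun x hx => (zero_lt_one.trans_le hx).ne'
  · rw [interior_Ici, mem_Ioi] at hx
    have h0 : x ≠ 0 := by positivity
    have h : HasDerivAt H (0 - 1 + (1 * Real.log x + x * x⁻¹)) x :=
      ((hasDerivAt_const x 1).sub (hasDerivAt_id x)).add
        ((hasDerivAt_id x).mul (Real.hasDerivAt_log h0))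
    rw [h.deriv, mul_inv_cancel₀ h0]
    have := Real.log_pos hx
    linarith

lemma H_le_sq {x : ℝ} (hx : 1 ≤ x) : H x ≤ (x - 1) ^ 2 := by
  have h := Real.log_le_sub_one_of_pos (zero_lt_one.trans_le hx)
  unfold H
  nlinarith

lemma Hplus_set_nonempty {y : ℝ} (hy : 0 < y) : {x : ℝ | 1 ≤ x ∧ y ≤ H x}.Nonempty := by
  refine ⟨Real.exp (1 + y), Real.one_le_exp (by positivity), ?_⟩
  have h : 1 ≤ Real.exp (1 + y) := Real.one_le_exp (by positivity)
  rw [H, Real.log_exp]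
  nlinarith

lemma one_lt_Hplusinv {y : ℝ} (hy : 0 < y) : 1 < Hplusinv y := by
  have hs : 0 < √y := Real.sqrt_pos.2 hy
  suffices 1 + √y ≤ Hplusinv y by linarith
  refine le_csInf (Hplus_set_nonempty hy) fun x hx => ?_
  have := Real.sqrt_le_left (show 0 ≤ x - 1 by linarith [hx.1]) |>.2 (hx.2.trans (H_le_sq hx.1))
  linarith

lemma lt_H_of_Hplusinv_lt {y a : ℝ} (hy : 0 < y) (ha : Hplusinv y < a) : y < H a := by
  obtain ⟨x, hx, hxa⟩ := exists_lt_of_csInf_lt (Hplus_set_nonempty hy) ha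
  exact hx.2.trans_lt (H_strictMonoOn hx.1 (hx.1.trans hxa.le) hxa)

lemma H_lt_of_lt_Hplusinv {y a : ℝ} (h1 : 1 ≤ a) (ha : a < Hplusinv y) : H a < y := by
  by_contra! h
  exact notMem_of_lt_csInf ha ⟨1, fun x hx => hx.1⟩ ⟨h1, h⟩

lemma factorial_le_exp {k : ℕ} (hk : 1 ≤ k) :
    (k.factorial : ℝ) ≤ Real.exp ((k + 1) * Real.log k + 1 - k) := by
  induction k, hk using Nat.le_induction with
  | base => simp
  | succ k hk ih =>
    have hk0 : (0 : ℝ) < k := by exact_mod_cast hk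
    have hlog : 1 ≤ (k + 1) * (Real.log (k + 1) - Real.log k) := by
      rw [← Real.log_div (by positivity) hk0.ne']
      have h := Real.one_sub_inv_le_log_of_pos (x := ((k : ℝ) + 1) / k) (by positivity)
      have e : 1 - (((k : ℝ) + 1) / k)⁻¹ = 1 / (k + 1) := by field_simp; ring
      rw [e] at h
      calc (1 : ℝ) = (k + 1) * (1 / (k + 1)) := by field_simp
        _ ≤ _ := by gcongr
    rw [Nat.factorial_succ, Nat.cast_mul]
    push_cast
    calc ((k : ℝ) + 1) * k.factorial
        ≤ Real.exp (Real.log (k + 1)) * Real.exp ((k + 1) * Real.log k + 1 - k) := by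
          rw [Real.exp_log (by positivity)]; gcongr
      _ = Real.exp (Real.log (k + 1) + ((k + 1) * Real.log k + 1 - k)) := (Real.exp_add _ _).symm
      _ ≤ _ := Real.exp_le_exp.2 (by linarith)

lemma exp_le_one_sub {q : ℝ} (h1 : q < 1) : Real.exp (-(q / (1 - q))) ≤ 1 - q := by
  have h : 0 < 1 - q := by linarith
  rw [← Real.le_log_iff_exp_le h]
  refine le_trans (le_of_eq ?_) (Real.one_sub_inv_le_log_of_pos h)
  field_simp
  ring

/-- A lower bound for the upper tail of the binomial distribution. -/
lemma exp_le_binTail {q s : ℝ} {N k : ℕ} (h0 : 0 ≤ q) (h1 : q < 1) (hk : 1 ≤ k) (hkN : k ≤ N)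
    (hs : 0 < s) (hsN : s ≤ ((N : ℝ) - k) * q) :
    Real.exp (k * (Real.log s - Real.log k + 1) - Real.log k - 1 - N * (q / (1 - q))) ≤
      binTail q N k := by
  refine le_trans ?_ (choose_mul_le_binTail h0 h1.le N k)
  have hk0 : (0 : ℝ) < k := by exact_mod_cast hk
  have hN : ((N : ℝ) - k) = ((N - k : ℕ) : ℝ) := by rw [Nat.cast_sub hkN]
  have hchoose : ((N : ℝ) - k) ^ k / k.factorial ≤ N.choose k := by
    refine le_trans ?_ (Nat.pow_le_choose k N)
    rw [hN]
    gcongr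
    omega
  calc Real.exp (k * (Real.log s - Real.log k + 1) - Real.log k - 1 - N * (q / (1 - q)))
      = s ^ k / Real.exp ((k + 1) * Real.log k + 1 - k) * Real.exp (-(q / (1 - q))) ^ N := by
        rw [← Real.exp_log hs, ← Real.exp_nat_mul, ← Real.exp_nat_mul, ← Real.exp_sub,
          ← Real.exp_add, Real.log_exp]
        congr 1
        ring
    _ ≤ (((N : ℝ) - k) * q) ^ k / k.factorial * (1 - q) ^ N := by
        gcongr
        · exact div_nonneg (pow_nonneg (hs.le.trans hsN) _) (by positivity)
        · exact pow_nonneg (hs.le.trans hsN) _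
        · exact factorial_le_exp hk
        · exact exp_le_one_sub h1
    _ = ((N : ℝ) - k) ^ k / k.factorial * q ^ k * (1 - q) ^ N := by
        rw [mul_pow]; ring
    _ ≤ _ := by
        have : 0 ≤ 1 - q := by linarith
        gcongr

end RCM

namespace RCM

variable {d : ℕ} {Ω : Type*} [mΩ : MeasurableSpace Ω] {P : Measure Ω}

lemma edgeProb_rhat_le (M : Model d P) {γ : ℝ} (hd : d ≠ 0) (hγ : 0 < γ) {n : ℕ} (hn : 2 ≤ n) :
    edgeProb M (rhat M γ n) univ ≤ γ * Real.log n / n := by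
  have hα := M.α_pos
  have hn0 : (0 : ℝ) < n := by positivity
  refine (edgeProb_univ_le M (rhat_pos M hγ hn)).trans (le_of_eq ?_)
  rw [rhat_pow M hd hγ]
  field_simp

lemma measureReal_exists_count_le [IsProbabilityMeasure P] (M : Model d P) {γ a : ℝ} (hd : d ≠ 0)
    (hγ : 0 < γ) (ha : 1 < a) {n : ℕ} (hn : 2 ≤ n) (m : ℕ) :
    P.real {ω | ∃ i ∈ Finset.Icc 1 m, a * (γ * Real.log n) ≤
        count (linkEvent M (rhat M γ n) univ i) ((Finset.Icc 1 m).erase i) ω} ≤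
      m * Real.exp (γ * Real.log n * (m / n * (a - 1) - a * Real.log a)) := by
  have hn0 : (0 : ℝ) < n := by positivity
  have ha0 : 0 < a := by linarith
  have hlog : 0 ≤ Real.log n := Real.log_natCast_nonneg n
  have hla : 0 ≤ Real.log a := Real.log_nonneg ha.le
  set k := ⌈a * (γ * Real.log n)⌉₊
  have hk : a * (γ * Real.log n) ≤ k := Nat.le_ceil _
  set q := edgeProb M (rhat M γ n) univ with hq
  have hq0 : 0 ≤ q := edgeProb_nonneg M
  have hone : ∀ i ∈ Finset.Icc 1 m, P.real {ω | a * (γ * Real.log n) ≤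
      count (linkEvent M (rhat M γ n) univ i) ((Finset.Icc 1 m).erase i) ω} ≤
      Real.exp (γ * Real.log n * (m / n * (a - 1) - a * Real.log a)) := by
    intro i hi
    have e : {ω | a * (γ * Real.log n) ≤
        count (linkEvent M (rhat M γ n) univ i) ((Finset.Icc 1 m).erase i) ω} =
        {ω | k ≤ count (linkEvent M (rhat M γ n) univ i) ((Finset.Icc 1 m).erase i) ω} := by
      ext ω
      rw [Set.mem_ofPred_eq, Set.mem_ofPred_eq, Nat.ceil_le]
    rw [e, measureReal_le_count_linkEvent M (Finset.mem_Icc.1 hi).1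
      (fun j hj => ⟨(Finset.mem_Icc.1 (Finset.mem_of_mem_erase hj)).1,
        (Finset.ne_of_mem_erase hj).symm⟩) MeasurableSet.univ]
    refine (binTail_le_exp hq0 (edgeProb_le_one M) hla _ _).trans ?_
    rw [Real.exp_log ha0]
    have hcard : ((Finset.Icc 1 m).erase i).card ≤ m := by
      rw [Finset.card_erase_of_mem hi, Nat.card_Icc]; omega
    have hb : 1 ≤ 1 + q * (a - 1) := by nlinarith
    calc Real.exp (-(Real.log a * k)) * (1 + q * (a - 1)) ^ ((Finset.Icc 1 m).erase i).card
        ≤ Real.exp (-(Real.log a * (a * (γ * Real.log n)))) * Real.exp (q * (a - 1)) ^ m := by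
          gcongr
          · calc (1 + q * (a - 1)) ^ ((Finset.Icc 1 m).erase i).card
                ≤ (1 + q * (a - 1)) ^ m := pow_le_pow_right₀ hb hcard
              _ ≤ _ := by
                  gcongr
                  rw [add_comm]
                  exact Real.add_one_le_exp _
      _ = Real.exp (m * q * (a - 1) - Real.log a * (a * (γ * Real.log n))) := by
          rw [← Real.exp_nat_mul, ← Real.exp_add]
          congr 1
          ring
      _ ≤ _ := by
          refine Real.exp_le_exp.2 ?_
          have : (m : ℝ) * q ≤ m * (γ * Real.log n / n) := by
            gcongr
            exact edgeProb_rhat_le M hd hγ hn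
          calc _ ≤ m * (γ * Real.log n / n) * (a - 1) - Real.log a * (a * (γ * Real.log n)) := by
                gcongr
            _ = _ := by ring
  have e : {ω | ∃ i ∈ Finset.Icc 1 m, a * (γ * Real.log n) ≤
        count (linkEvent M (rhat M γ n) univ i) ((Finset.Icc 1 m).erase i) ω} =
      ⋃ i ∈ Finset.Icc 1 m, {ω | a * (γ * Real.log n) ≤
        count (linkEvent M (rhat M γ n) univ i) ((Finset.Icc 1 m).erase i) ω} := by
    ext ω; simp
  rw [e]
  refine (measureReal_biUnion_finset_le _ _).trans ((Finset.sum_le_card_nsmul _ _ _ hone).trans ?_)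
  simp

lemma eventually_le_rpow (C : ℝ) {δ : ℝ} (hδ : 0 < δ) :
    ∀ᶠ n : ℕ in atTop, C ≤ (n : ℝ) ^ δ :=
  ((tendsto_rpow_atTop hδ).comp tendsto_natCast_atTop_atTop).eventually_ge_atTop C

/-- Large degrees are unlikely. -/
lemma exists_upper_tail [IsProbabilityMeasure P] (M : Model d P) {γ a : ℝ} (hd : d ≠ 0)
    (hγ : 0 < γ) (ha : 1 < a) (hH : 1 < γ * H a) :
    ∃ ε : ℝ, 0 < ε ∧ ∃ δ : ℝ, 0 < δ ∧ ∀ᶠ n : ℕ in atTop,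
      P.real {ω | ∃ i ∈ Finset.Icc 1 ⌊(1 + ε) * n⌋₊, a * (γ * Real.log n) ≤
        count (linkEvent M (rhat M γ n) univ i) ((Finset.Icc 1 ⌊(1 + ε) * n⌋₊).erase i) ω} ≤
      (n : ℝ) ^ (-δ) := by
  have ha1 : 0 < a - 1 := by linarith
  set ε := (γ * H a - 1) / (2 * γ * (a - 1)) with hε
  have hε0 : 0 < ε := div_pos (by linarith) (by positivity)
  have hεa : γ * (ε * (a - 1)) = (γ * H a - 1) / 2 := by rw [hε]; field_simp
  refine ⟨ε, hε0, (γ * H a - 1) / 4, by linarith, ?_⟩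
  filter_upwards [eventually_ge_atTop 2,
    eventually_le_rpow (1 + ε) (δ := (γ * H a - 1) / 4) (by linarith)] with n hn hnC
  have hn0 : (0 : ℝ) < n := by positivity
  have hlog : 0 ≤ Real.log n := Real.log_natCast_nonneg n
  refine (measureReal_exists_count_le M hd hγ ha hn _).trans ?_
  have hm : (⌊(1 + ε) * n⌋₊ : ℝ) ≤ (1 + ε) * n := Nat.floor_le (by positivity)
  have hmn : (⌊(1 + ε) * n⌋₊ : ℝ) / n ≤ 1 + ε := by rwa [div_le_iff₀ hn0]
  calc _ ≤ (1 + ε) * n * Real.exp (γ * Real.log n * ((1 + ε) * (a - 1) - a * Real.log a)) := by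
        gcongr
    _ = (1 + ε) * (n : ℝ) ^ (-(γ * H a - 1) / 2) := by
        rw [mul_assoc, Real.rpow_def_of_pos hn0]
        nth_rewrite 1 [← Real.exp_log hn0]
        rw [← Real.exp_add]
        congr 2
        have : (1 + ε) * (a - 1) - a * Real.log a = ε * (a - 1) - H a := by unfold H; ring
        rw [this]
        linear_combination Real.log n * hεa
    _ ≤ (n : ℝ) ^ ((γ * H a - 1) / 4) * (n : ℝ) ^ (-(γ * H a - 1) / 2) := by gcongr
    _ = _ := by
        rw [← Real.rpow_add hn0]
        congr 1
        ring

end RCM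

namespace RCM

lemma tendsto_mul_log_atTop {γ : ℝ} (hγ : 0 < γ) :
    Tendsto (fun n : ℕ => γ * Real.log n) atTop atTop :=
  (Real.tendsto_log_atTop.comp tendsto_natCast_atTop_atTop).const_mul_atTop hγ

lemma eventually_const_mul_log_add_le (A B : ℝ) {ε : ℝ} (hε : 0 < ε) :
    ∀ᶠ n : ℕ in atTop, A * Real.log n + B ≤ ε * n := by
  have h : Tendsto (fun n : ℕ => A * (Real.log n / n) + B / n) atTop (nhds (A * 0 + 0)) :=
    (tendsto_log_div_nat.const_mul A).add (tendsto_natCast_atTop_atTop.const_div_atTop B)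
  rw [mul_zero, add_zero] at h
  filter_upwards [h.eventually_lt_const hε, eventually_gt_atTop 0] with n hn hn0
  have hn0' : (0 : ℝ) < n := by exact_mod_cast hn0
  have := mul_le_mul_of_nonneg_right hn.le hn0'.le
  calc A * Real.log n + B = (A * (Real.log n / n) + B / n) * n := by field_simp
    _ ≤ _ := this

/-- The upper tail of a nearly Poisson binomial distribution decays polynomially at the rate
given by `H`. -/
lemma eventually_rpow_le_binTail {γ a ε β : ℝ} (hγ : 0 < γ) (ha : 1 ≤ a) (hε : 0 < ε)
    (hε4 : 4 * ε < 1) (hβ : γ * (H a + ε - a * Real.log (1 - 4 * ε)) < β) {q : ℕ → ℝ}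
    {N : ℕ → ℕ}
    (hq1 : ∀ᶠ n : ℕ in atTop, q n ≤ γ * Real.log n / n)
    (hq2 : ∀ᶠ n : ℕ in atTop, (1 - ε) * (γ * Real.log n / n) ≤ q n)
    (hN1 : ∀ᶠ n : ℕ in atTop, N n ≤ n)
    (hN2 : ∀ᶠ n : ℕ in atTop, (1 - 2 * ε) * n - 1 ≤ N n) :
    ∀ᶠ n : ℕ in atTop, (n : ℝ) ^ (-β) ≤ binTail (q n) (N n) ⌈a * (γ * Real.log n)⌉₊ := by
  have ha0 : 0 < a := by linarith
  set b : ℕ → ℝ := fun n => γ * Real.log n with hb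
  set x : ℕ → ℝ := fun n => ⌈a * b n⌉₊ / b n with hx
  have hbt : Tendsto b atTop atTop := tendsto_mul_log_atTop hγ
  have hxt : Tendsto x atTop (nhds a) := (tendsto_nat_ceil_mul_div_atTop ha0.le).comp hbt
  have hlx : Tendsto (fun n => Real.log (x n)) atTop (nhds (Real.log a)) := hxt.log ha0.ne'
  have hlb : Tendsto (fun n => Real.log (b n) / b n) atTop (nhds 0) := by
    have := (Real.isLittleO_log_id_atTop.tendsto_div_nhds_zero).comp hbt
    exact this
  have hF : Tendsto (fun n => x n * (Real.log (1 - 4 * ε) - Real.log (x n) + 1) -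
      ((Real.log (x n) + 1) / b n + Real.log (b n) / b n) - (1 + ε)) atTop
      (nhds (a * (Real.log (1 - 4 * ε) - Real.log a + 1) - (0 + 0) - (1 + ε))) :=
    ((hxt.mul ((tendsto_const_nhds.sub hlx).add_const 1)).sub
      (((hlx.add_const 1).div_atTop hbt).add hlb)).sub_const _
  have hlim : -(β / γ) < a * (Real.log (1 - 4 * ε) - Real.log a + 1) - (0 + 0) - (1 + ε) := by
    have h : H a + ε - a * Real.log (1 - 4 * ε) < β / γ := by
      rwa [lt_div_iff₀ hγ, mul_comm]
    unfold H at h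
    linarith
  have hq0 : ∀ᶠ n : ℕ in atTop, γ * Real.log n / n ≤ ε / (1 + ε) := by
    have := tendsto_log_div_nat.const_mul γ
    rw [mul_zero] at this
    filter_upwards [this.eventually_lt_const (show 0 < ε / (1 + ε) by positivity)] with n hn
    rw [mul_div_assoc]
    exact hn.le
  filter_upwards [hF.eventually_const_lt hlim, hq1, hq2, hN1, hN2, hq0, eventually_gt_atTop 0,
    hbt.eventually_gt_atTop 0, eventually_const_mul_log_add_le (a * γ) 2 hε]
    with n hFn hq1 hq2 hN1 hN2 hq0 hn hbn hnε
  have hn0 : (0 : ℝ) < n := by exact_mod_cast hn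
  have hxn : 0 < x n := by
    have : (0 : ℝ) < ⌈a * b n⌉₊ := by exact_mod_cast Nat.ceil_pos.2 (mul_pos ha0 hbn)
    exact div_pos this hbn
  set k := ⌈a * b n⌉₊ with hk
  have hkx : (k : ℝ) = x n * b n := by simp only [hx]; field_simp; rfl
  have hk1 : 1 ≤ k := Nat.ceil_pos.2 (mul_pos ha0 hbn)
  have hkle : (k : ℝ) < a * b n + 1 := Nat.ceil_lt_add_one (mul_pos ha0 hbn).le
  have hNk : (1 - 3 * ε) * n ≤ (N n : ℝ) - k := by
    have : a * b n = a * γ * Real.log n := by simp only [hb]; ring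
    nlinarith
  have hbq : 0 ≤ γ * Real.log n / n := div_nonneg hbn.le hn0.le
  have hqn0 : 0 ≤ q n := le_trans (mul_nonneg (by linarith) hbq) hq2
  have hqε : q n ≤ ε / (1 + ε) := hq1.trans hq0
  have hqlt : q n < 1 := hqε.trans_lt (by rw [div_lt_one (by positivity)]; linarith)
  have hs : (1 - 4 * ε) * b n ≤ ((N n : ℝ) - k) * q n := by
    calc (1 - 4 * ε) * b n ≤ (1 - 3 * ε) * (1 - ε) * b n := by
          gcongr; nlinarith
      _ = (1 - 3 * ε) * n * ((1 - ε) * (γ * Real.log n / n)) := by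
          simp only [hb]; field_simp
      _ ≤ _ := by
          refine mul_le_mul hNk hq2 (mul_nonneg (by linarith) hbq) ?_
          exact le_trans (mul_nonneg (by linarith) hn0.le) hNk
  have hkN : k ≤ N n := by
    have : (0 : ℝ) ≤ (N n : ℝ) - k := le_trans (mul_nonneg (by linarith) hn0.le) hNk
    exact_mod_cast sub_nonneg.1 this
  have hNq : N n * (q n / (1 - q n)) ≤ (1 + ε) * b n := by
    have h1 : (1 + ε) * (1 - q n) ≥ 1 := by
      have : (1 + ε) * q n ≤ ε := by
        rw [le_div_iff₀ (by positivity)] at hqε; linarith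
      linarith
    have h2 : N n * q n ≤ b n := by
      calc N n * q n ≤ n * (γ * Real.log n / n) := by
            gcongr
        _ = b n := by simp only [hb]; field_simp
    rw [mul_div_assoc', div_le_iff₀ (by linarith)]
    nlinarith
  refine le_trans ?_ (exp_le_binTail hqn0 hqlt hk1 hkN (mul_pos (by linarith) hbn) hs)
  rw [Real.rpow_def_of_pos hn0]
  refine Real.exp_le_exp.2 ?_
  have e1 : Real.log k = Real.log (x n) + Real.log (b n) := by
    rw [hkx, Real.log_mul hxn.ne' hbn.ne']
  have e2 : Real.log ((1 - 4 * ε) * b n) = Real.log (1 - 4 * ε) + Real.log (b n) :=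
    Real.log_mul (by linarith) hbn.ne'
  calc Real.log n * -β = b n * -(β / γ) := by simp only [hb]; field_simp
    _ ≤ b n * (x n * (Real.log (1 - 4 * ε) - Real.log (x n) + 1) -
      ((Real.log (x n) + 1) / b n + Real.log (b n) / b n) - (1 + ε)) := by
        gcongr
    _ = k * (Real.log (1 - 4 * ε) - Real.log (x n) + 1) - (Real.log (x n) + Real.log (b n)) - 1
          - (1 + ε) * b n := by
        rw [hkx]; field_simp; ring
    _ ≤ _ := by
        rw [e1, e2]
        have : (k : ℝ) * (Real.log (1 - 4 * ε) + Real.log (b n) -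
            (Real.log (x n) + Real.log (b n)) + 1) =
            k * (Real.log (1 - 4 * ε) - Real.log (x n) + 1) := by ring
        linarith

end RCM

namespace RCM

variable {d : ℕ} {Ω : Type*} [mΩ : MeasurableSpace Ω] {P : Measure Ω}

lemma linkEvent_subset_univ (M : Model d P) (r : ℝ) (B : Set ℝ) (i j : ℕ) :
    linkEvent M r B i j ⊆ linkEvent M r univ i j := fun _ h => ⟨h.1, mem_univ _⟩

lemma count_mono {ι : Type*} {Ω : Type*} {A B : ι → Set Ω} {s t : Finset ι} {ω : Ω} (hst : s ⊆ t)
    (h : ∀ j ∈ s, ω ∈ A j → ω ∈ B j) : count A s ω ≤ count B t ω := by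
  classical
  refine Finset.card_le_card fun j hj => ?_
  simp only [Finset.mem_filter] at hj ⊢
  exact ⟨hst hj.1, h j hj.1 hj.2⟩

/-- The second moment bound for the event that no vertex among `1, …, m₁` has many short edges
to the vertices `m₁ + 1, …, m`. -/
lemma measureReal_forall_count_lt_le [IsProbabilityMeasure P] (M : Model d P) {r K y : ℝ}
    (hK : 0 ≤ K * r) {m₁ m : ℕ} (hm₁ : 1 ≤ m₁)
    (hp : 0 < binTail (edgeProb M r (Iic (K * r))) (m - m₁) ⌈y⌉₊) :
    P.real {ω | ∀ i ∈ Finset.Icc 1 m₁,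
        (count (linkEvent M r univ i) (Finset.Ioc m₁ m) ω : ℝ) < y} ≤
      (1 / m₁ + (2 * (K * r)) ^ d *
        volume.real (Metric.closedBall (0 : EuclideanSpace ℝ (Fin d)) 1)) /
        binTail (edgeProb M r (Iic (K * r))) (m - m₁) ⌈y⌉₊ := by
  have hJ : ∀ i ∈ Finset.Icc 1 m₁, ∀ j ∈ Finset.Ioc m₁ m, 1 ≤ j ∧ i ≠ j := by
    intro i hi j hj
    simp only [Finset.mem_Icc, Finset.mem_Ioc] at hi hj
    omega
  have hi1 : ∀ i ∈ Finset.Icc 1 m₁, 1 ≤ i := fun i hi => (Finset.mem_Icc.1 hi).1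
  have h := measureReal_iInter_compl_le (P := P) (s := Finset.Icc 1 m₁)
    (A := fun i => {ω | ⌈y⌉₊ ≤ count (linkEvent M r (Iic (K * r)) i) (Finset.Ioc m₁ m) ω})
    (c := (2 * (K * r)) ^ d *
        volume.real (Metric.closedBall (0 : EuclideanSpace ℝ (Fin d)) 1))
    ⟨1, Finset.mem_Icc.2 ⟨le_rfl, hm₁⟩⟩ hp
    (fun i _ => measurableSet_le_count
      (fun j _ => measurableSet_linkEvent M measurableSet_Iic i j) _)
    (fun i hi => by
      rw [measureReal_le_count_linkEvent M (hi1 i hi) (hJ i hi) measurableSet_Iic, Nat.card_Ioc])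
    (by positivity)
    (fun i hi j hj hij => by
      have := measureReal_le_count_linkEvent_inter_le M (r := r) (ρ := K * r) (hi1 i hi) (hi1 j hj)
        hij (J := Finset.Ioc m₁ m)
        (fun l hl => ⟨(hJ i hi l hl).1, (hJ i hi l hl).2, (hJ j hj l hl).2⟩) ⌈y⌉₊
      rwa [Nat.card_Ioc, volume_closedBall_eq (by positivity)] at this)
  rw [Nat.card_Icc, Nat.add_sub_cancel, ← div_div, ← add_div] at h
  refine le_trans (measureReal_mono ?_) h
  intro ω hω i hi hle
  have h1 := hω i hi
  have h2 : y ≤ count (linkEvent M r (Iic (K * r)) i) (Finset.Ioc m₁ m) ω := Nat.ceil_le.1 hle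
  have h3 : count (linkEvent M r (Iic (K * r)) i) (Finset.Ioc m₁ m) ω ≤
      count (linkEvent M r univ i) (Finset.Ioc m₁ m) ω :=
    count_mono subset_rfl fun j _ hj => linkEvent_subset_univ M r _ i j hj
  have h4 : (count (linkEvent M r (Iic (K * r)) i) (Finset.Ioc m₁ m) ω : ℝ) ≤
      count (linkEvent M r univ i) (Finset.Ioc m₁ m) ω := by exact_mod_cast h3
  linarith

lemma eventually_log_le_rpow (A B : ℝ) {δ : ℝ} (hδ : 0 < δ) :
    ∀ᶠ n : ℕ in atTop, A + B * Real.log n ≤ (n : ℝ) ^ δ := by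
  have h1 : (fun x : ℝ => A + B * Real.log x) =o[atTop] fun x => x ^ δ :=
    (Asymptotics.isLittleO_const_left.2 (Or.inr
      (tendsto_norm_atTop_atTop.comp (tendsto_rpow_atTop hδ)))).add
      ((isLittleO_log_rpow_atTop hδ).const_mul_left B)
  filter_upwards [tendsto_natCast_atTop_atTop.eventually (h1.bound zero_lt_one)] with n hn
  rw [one_mul, Real.norm_of_nonneg (Real.rpow_nonneg (Nat.cast_nonneg n) δ)] at hn
  exact (le_abs_self _).trans hn

/-- With high probability some vertex has a large degree. -/
lemma exists_lower_tail [IsProbabilityMeasure P] (M : Model d P) {γ a : ℝ} (hd : d ≠ 0)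
    (hγ : 0 < γ) (ha : 1 ≤ a) (hH : γ * H a < 1) :
    ∃ ε : ℝ, 0 < ε ∧ 4 * ε < 1 ∧ ∃ δ : ℝ, 0 < δ ∧ ∀ᶠ n : ℕ in atTop,
      P.real {ω | ∀ i ∈ Finset.Icc 1 ⌊ε * n⌋₊,
        (count (linkEvent M (rhat M γ n) univ i) (Finset.Ioc ⌊ε * n⌋₊ ⌊(1 - ε) * n⌋₊) ω : ℝ) <
          a * (γ * Real.log n)} ≤ (n : ℝ) ^ (-δ) := by
  have hα := M.α_pos
  set β := (γ * H a + 1) / 2 with hβdef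
  have hβ : β < 1 := by rw [hβdef]; linarith
  obtain ⟨ε, hφ, hε4, hε⟩ : ∃ ε : ℝ, γ * (H a + ε - a * Real.log (1 - 4 * ε)) < β ∧
      4 * ε < 1 ∧ 0 < ε := by
    have hc : ContinuousAt (fun ε : ℝ => γ * (H a + ε - a * Real.log (1 - 4 * ε))) 0 := by
      have : ContinuousAt (fun ε : ℝ => Real.log (1 - 4 * ε)) 0 :=
        ContinuousAt.log (by fun_prop) (by norm_num)
      fun_prop
    have h1 : ∀ᶠ ε in nhds (0 : ℝ), γ * (H a + ε - a * Real.log (1 - 4 * ε)) < β :=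
      hc.eventually_lt_const (by simp [hβdef]; linarith)
    have h2 : ∀ᶠ ε in nhds (0 : ℝ), 4 * ε < 1 :=
      (show ContinuousAt (fun ε : ℝ => 4 * ε) 0 by fun_prop).eventually_lt_const (by norm_num)
    obtain ⟨ε, h⟩ := (((h1.and h2).filter_mono (nhdsWithin_le_nhds (s := Ioi 0))).and
      self_mem_nhdsWithin).exists
    exact ⟨ε, h.1.1, h.1.2, h.2⟩
  obtain ⟨K, hK⟩ := ((tendsto_truncIntegral M).eventually_const_lt
    (show (1 - ε) * M.α < M.α by nlinarith)).exists
  have hqeq : ∀ᶠ n : ℕ in atTop, edgeProb M (rhat M γ n) (Iic (K * rhat M γ n)) =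
      γ * Real.log n / n * (truncIntegral M K / M.α) := by
    have h := (tendsto_rhat M (γ := γ) hd).const_mul (K : ℝ)
    rw [mul_zero] at h
    filter_upwards [h.eventually_lt_const (show (0 : ℝ) < 1 / 2 by norm_num),
      eventually_ge_atTop 2] with n hn hn2
    have hn0 : (0 : ℝ) < n := by positivity
    rw [edgeProb_Iic M (rhat_pos M hγ hn2) hn, rhat_pow M hd hγ]
    field_simp
  have hp := eventually_rpow_le_binTail hγ ha hε hε4 hφ
    (q := fun n => edgeProb M (rhat M γ n) (Iic (K * rhat M γ n)))
    (N := fun n => ⌊(1 - ε) * n⌋₊ - ⌊ε * n⌋₊)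
    (by
      filter_upwards [hqeq] with n hn
      rw [hn]
      have := Real.log_natCast_nonneg n
      exact mul_le_of_le_one_right (by positivity) ((div_le_one hα).2 (truncIntegral_le M K)))
    (by
      filter_upwards [hqeq] with n hn
      rw [hn, mul_comm]
      have := Real.log_natCast_nonneg n
      exact mul_le_mul_of_nonneg_left ((le_div_iff₀ hα).2 hK.le) (by positivity))
    (by
      filter_upwards with n
      refine (Nat.sub_le _ _).trans ?_
      refine Nat.floor_le_of_le ?_
      have : (0 : ℝ) ≤ n := Nat.cast_nonneg n
      nlinarith)
    (by
      filter_upwards with n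
      have hn0 : (0 : ℝ) ≤ n := Nat.cast_nonneg n
      have h1 : (1 - ε) * n < ⌊(1 - ε) * n⌋₊ + 1 := Nat.lt_floor_add_one _
      have h2 : (⌊ε * n⌋₊ : ℝ) ≤ ε * n := Nat.floor_le (by positivity)
      have h3 : (⌊(1 - ε) * n⌋₊ : ℝ) ≤ ((⌊(1 - ε) * n⌋₊ - ⌊ε * n⌋₊ : ℕ) : ℝ) + ⌊ε * n⌋₊ := by
        exact_mod_cast (by omega : ⌊(1 - ε) * (n : ℝ)⌋₊ ≤
          ⌊(1 - ε) * (n : ℝ)⌋₊ - ⌊ε * (n : ℝ)⌋₊ + ⌊ε * (n : ℝ)⌋₊)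
      linarith)
  set C := volume.real (Metric.closedBall (0 : EuclideanSpace ℝ (Fin d)) 1) with hC
  refine ⟨ε, hε, hε4, (1 - β) / 2, by linarith, ?_⟩
  filter_upwards [hp, eventually_ge_atTop 2, eventually_const_mul_log_add_le 0 2 hε,
    eventually_log_le_rpow (2 / ε) ((2 * K) ^ d * C * γ / M.α) (δ := (1 - β) / 2) (by linarith)]
    with n hpn hn hεn hlog
  have hn0 : (0 : ℝ) < n := by positivity
  have hr := rhat_nonneg M hγ n
  have hpos : 0 < (n : ℝ) ^ (-β) := Real.rpow_pos_of_pos hn0 _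
  have hfl : ε * n < ⌊ε * n⌋₊ + 1 := Nat.lt_floor_add_one _
  have hm₁ : 1 ≤ ⌊ε * n⌋₊ := Nat.le_floor (by push_cast; linarith)
  have hlogn := Real.log_natCast_nonneg n
  refine (measureReal_forall_count_lt_le M (by positivity) hm₁ (hpos.trans_le hpn)).trans ?_
  have h1 : 1 / (⌊ε * n⌋₊ : ℝ) ≤ 2 / ε / n := by
    rw [div_div]
    have h2 : ε * n / 2 ≤ ⌊ε * n⌋₊ := by linarith
    calc 1 / (⌊ε * n⌋₊ : ℝ) ≤ 1 / (ε * n / 2) := one_div_le_one_div_of_le (by positivity) h2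
      _ = _ := by field_simp
  have h2 : (2 * (K * rhat M γ n)) ^ d * C = (2 * K) ^ d * C * γ / M.α * Real.log n / n := by
    rw [← mul_assoc, mul_pow, rhat_pow M hd hγ]
    field_simp
  have hC0 : 0 ≤ C := measureReal_nonneg
  calc _ ≤ (2 / ε / n + (2 * K) ^ d * C * γ / M.α * Real.log n / n) / (n : ℝ) ^ (-β) := by
        rw [h2]
        gcongr
    _ = (2 / ε + (2 * K) ^ d * C * γ / M.α * Real.log n) * (n : ℝ) ^ (β - 1) := by
        rw [← add_div, Real.rpow_neg hn0.le, Real.rpow_sub_one hn0.ne']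
        field_simp
    _ ≤ (n : ℝ) ^ ((1 - β) / 2) * (n : ℝ) ^ (β - 1) := by gcongr
    _ = _ := by
        rw [← Real.rpow_add hn0]
        congr 1
        ring

end RCM

namespace RCM

variable {d : ℕ} {Ω : Type*} [mΩ : MeasurableSpace Ω] {P : Measure Ω}

lemma map_N (M : Model d P) (n : ℕ) : P.map (M.N n) = poissonMeasure n := by
  refine Measure.ext_of_singleton fun k => ?_
  rw [Measure.map_apply (M.N_meas n) (measurableSet_singleton k), poissonMeasure_singleton]
  exact M.N_poisson n k

lemma hasSum_poisson_exp (n : ℕ) (t : ℝ) :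
    HasSum (fun k : ℕ => Real.exp (-(n : ℝ)) * (n : ℝ) ^ k / k.factorial * Real.exp (t * k))
      (Real.exp (n * (Real.exp t - 1))) := by
  have h := (NormedSpace.expSeries_div_hasSum_exp ((n : ℝ) * Real.exp t)).mul_left
    (Real.exp (-(n : ℝ)))
  rw [← Real.exp_eq_exp_ℝ, ← Real.exp_add] at h
  convert! h using 1
  · ext k
    rw [mul_pow, ← Real.exp_nat_mul, mul_comm t]
    ring
  · congr 1
    ring

lemma integrable_exp_N (M : Model d P) (n : ℕ) (t : ℝ) :
    Integrable (fun ω => Real.exp (t * M.N n ω)) P := by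
  have h : Integrable (fun k : ℕ => Real.exp (t * k)) (P.map (M.N n)) := by
    rw [map_N, integrable_poissonMeasure_iff]
    simpa using (hasSum_poisson_exp n t).summable
  exact h.comp_measurable (M.N_meas n)

lemma mgf_N (M : Model d P) (n : ℕ) (t : ℝ) :
    mgf (fun ω => (M.N n ω : ℝ)) P t = Real.exp (n * (Real.exp t - 1)) := by
  have h : ∫ k : ℕ, Real.exp (t * k) ∂(P.map (M.N n)) = Real.exp (n * (Real.exp t - 1)) := by
    rw [map_N, integral_poissonMeasure]
    simpa using (hasSum_poisson_exp n t).tsum_eq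
  rw [← h, integral_map (M.N_meas n).aemeasurable .of_discrete]
  rfl

lemma H_pos {x : ℝ} (hx : 0 < x) (h1 : x ≠ 1) : 0 < H x := by
  have h := Real.log_lt_sub_one_of_pos (inv_pos.2 hx) (by simpa using h1)
  rw [Real.log_inv] at h
  have := mul_lt_mul_of_pos_left h hx
  rw [mul_sub, mul_inv_cancel₀ hx.ne'] at this
  unfold H
  linarith

lemma measureReal_N_ge_le [IsProbabilityMeasure P] (M : Model d P) (n : ℕ) {x : ℝ} (hx : 1 ≤ x) :
    P.real {ω | x * n ≤ M.N n ω} ≤ Real.exp (-(H x * n)) := by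
  have hx0 : 0 < x := by linarith
  refine (measure_ge_le_exp_mul_mgf (X := fun ω => (M.N n ω : ℝ)) (x * n) (Real.log_nonneg hx)
    (integrable_exp_N M n _)).trans (le_of_eq ?_)
  rw [mgf_N, Real.exp_log hx0, ← Real.exp_add, H]
  congr 1
  ring

lemma measureReal_N_le_le [IsProbabilityMeasure P] (M : Model d P) (n : ℕ) {x : ℝ} (hx0 : 0 < x)
    (hx : x ≤ 1) : P.real {ω | (M.N n ω : ℝ) ≤ x * n} ≤ Real.exp (-(H x * n)) := by
  refine (measure_le_le_exp_mul_mgf (X := fun ω => (M.N n ω : ℝ)) (x * n)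
    (Real.log_nonpos hx0.le hx) (integrable_exp_N M n _)).trans (le_of_eq ?_)
  rw [mgf_N, Real.exp_log hx0, ← Real.exp_add, H]
  congr 1
  ring

lemma eventually_exp_le_rpow {c : ℝ} (hc : 0 < c) :
    ∀ᶠ n : ℕ in atTop, Real.exp (-(c * n)) ≤ (n : ℝ) ^ (-1 : ℝ) := by
  filter_upwards [eventually_const_mul_log_add_le 1 0 hc, eventually_gt_atTop 0] with n hn hn0
  rw [Real.rpow_def_of_pos (by exact_mod_cast hn0)]
  exact Real.exp_le_exp.2 (by linarith)

/-- The Borel-Cantelli lemma along a sequence of powers. -/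
lemma ae_eventually_notMem_pow [IsProbabilityMeasure P] {B : ℕ → Set Ω} {δ : ℝ}
    (h : ∀ᶠ n : ℕ in atTop, P.real (B n) ≤ (n : ℝ) ^ (-δ)) {p : ℕ} (hp0 : p ≠ 0)
    (hp : 1 < δ * p) : ∀ᵐ ω ∂P, ∀ᶠ k : ℕ in atTop, ω ∉ B (k ^ p) := by
  obtain ⟨k₀, hk₀⟩ := eventually_atTop.1 ((tendsto_pow_atTop hp0).eventually h)
  have hsum : ∑' k : ℕ, P (B ((k + k₀) ^ p)) ≠ ⊤ := by
    have hs : Summable fun k : ℕ => ((k + k₀ : ℕ) : ℝ) ^ (-(δ * p)) :=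
      (summable_nat_add_iff k₀).2 (Real.summable_nat_rpow.2 (by linarith))
    refine ne_top_of_le_ne_top (hs.tsum_ofReal_ne_top) (ENNReal.tsum_le_tsum fun k => ?_)
    rw [← ofReal_measureReal]
    refine ENNReal.ofReal_le_ofReal ((hk₀ _ (Nat.le_add_left k₀ k)).trans (le_of_eq ?_))
    rw [Nat.cast_pow, ← Real.rpow_natCast, ← Real.rpow_mul (Nat.cast_nonneg _)]
    congr 1
    ring
  filter_upwards [ae_eventually_notMem hsum] with ω hω
  obtain ⟨k₁, hk₁⟩ := eventually_atTop.1 hω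
  filter_upwards [eventually_ge_atTop (k₁ + k₀)] with k hk
  have := hk₁ (k - k₀) (by omega)
  rwa [Nat.sub_add_cancel (by omega)] at this

end RCM

namespace RCM

/-- Every large number lies between two consecutive `p`-th powers. -/
lemma exists_pow_le_lt {p : ℕ} (hp : p ≠ 0) {k₀ n : ℕ} (hn : k₀ ^ p ≤ n) :
    ∃ k, k₀ ≤ k ∧ k ^ p ≤ n ∧ n ≤ (k + 1) ^ p := by
  have hex : ∃ k, n < (k + 1) ^ p :=
    ⟨n, (Nat.lt_succ_self n).trans_le (Nat.le_self_pow hp _)⟩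
  classical
  have hlt := Nat.find_spec hex
  refine ⟨Nat.find hex, ?_, ?_, hlt.le⟩
  · by_contra! hk
    exact absurd (hn.trans_lt hlt) (not_lt.2 (Nat.pow_le_pow_left hk p))
  · rcases Nat.eq_zero_or_pos (Nat.find hex) with h0 | hpos
    · rw [h0, zero_pow hp]; exact Nat.zero_le n
    · have := Nat.find_min hex (Nat.sub_lt hpos one_pos)
      rw [Nat.sub_add_cancel (show 1 ≤ Nat.find hex from hpos)] at this
      exact not_lt.1 this

lemma eventually_succ_pow_le (p : ℕ) {η : ℝ} (hη : 1 < η) :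
    ∀ᶠ k : ℕ in atTop, (((k + 1) ^ p : ℕ) : ℝ) ≤ η * ((k ^ p : ℕ) : ℝ) := by
  have h : Tendsto (fun k : ℕ => (1 + 1 / (k : ℝ)) ^ p) atTop (nhds ((1 + 0) ^ p)) :=
    ((tendsto_one_div_atTop_nhds_zero_nat).const_add 1).pow p
  rw [add_zero, one_pow] at h
  filter_upwards [h.eventually_lt_const hη, eventually_gt_atTop 0] with k hk hk0
  have hk0' : (0 : ℝ) < k := by exact_mod_cast hk0
  push_cast
  calc ((k : ℝ) + 1) ^ p = (1 + 1 / (k : ℝ)) ^ p * k ^ p := by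
        rw [← mul_pow]; field_simp
    _ ≤ _ := by gcongr

variable {d : ℕ} {Ω : Type*} [mΩ : MeasurableSpace Ω] {P : Measure Ω} (M : Model d P)

lemma linkEvent_mono {r r' : ℝ} (hr : 0 < r) (hrr : r ≤ r') (B : Set ℝ) (i j : ℕ) :
    linkEvent M r B i j ⊆ linkEvent M r' B i j := fun _ h =>
  ⟨h.1.trans (gExt_antitone M (div_le_div_of_nonneg_left (torusDist_nonneg _ _) hr hrr)), h.2⟩

lemma deg_eq_count {n i : ℕ} {r : ℝ} (hr : 0 ≤ r) {ω : Ω} (hi : i ∈ Finset.Icc 1 (M.N n ω)) :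
    deg M n r ω i =
      count (linkEvent M r univ i) ((Finset.Icc 1 (M.N n ω)).erase i) ω := by
  classical
  rw [deg, count, ← Set.ncard_coe_finset]
  congr 1
  ext j
  rw [Finset.mem_Icc] at hi
  simp only [adj, linkEvent, linked, edgeVar, Set.mem_ofPred_eq, Finset.coe_filter,
    Finset.mem_erase, Finset.mem_Icc, mem_univ, and_true]
  rw [gExt_of_nonneg M (div_nonneg (torusDist_nonneg _ _) hr)]
  constructor
  · rintro ⟨h1, h2, h3, h4, h5, h6⟩
    exact ⟨⟨h1.symm, h3, h5⟩, h6⟩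
  · rintro ⟨⟨h1, h3, h5⟩, h6⟩
    exact ⟨h1.symm, hi.1, h3, hi.2, h5, h6⟩

lemma maxDeg_le_of_forall_count_lt {n m : ℕ} {r r' y : ℝ} (hr : 0 < r) (hrr : r ≤ r') (hy : 0 ≤ y)
    {ω : Ω} (hN : M.N n ω ≤ m)
    (h : ∀ i ∈ Finset.Icc 1 m,
      (count (linkEvent M r' univ i) ((Finset.Icc 1 m).erase i) ω : ℝ) < y) :
    (maxDeg M n r ω : ℝ) ≤ y := by
  refine (Nat.le_floor_iff hy).1 (Finset.sup_le fun i hi => Nat.le_floor ?_)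
  have hsub : Finset.Icc 1 (M.N n ω) ⊆ Finset.Icc 1 m := Finset.Icc_subset_Icc_right hN
  rw [deg_eq_count M hr.le hi]
  refine le_trans ?_ (h i (hsub hi)).le
  exact_mod_cast count_mono (Finset.erase_subset_erase i hsub)
    fun j _ hj => linkEvent_mono M hr hrr univ i j hj

lemma le_maxDeg_of_le_count {n i m₁ m : ℕ} {r r' y : ℝ} (hr' : 0 < r') (hrr : r' ≤ r) {ω : Ω}
    (hN : m ≤ M.N n ω) (hm : m₁ ≤ m) (hi : i ∈ Finset.Icc 1 m₁)
    (h : y ≤ count (linkEvent M r' univ i) (Finset.Ioc m₁ m) ω) :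
    y ≤ maxDeg M n r ω := by
  have hi' : i ∈ Finset.Icc 1 (M.N n ω) := by
    rw [Finset.mem_Icc] at hi ⊢; omega
  have h1 : deg M n r ω i ≤ maxDeg M n r ω := Finset.le_sup (f := deg M n r ω) hi'
  have h2 : count (linkEvent M r' univ i) (Finset.Ioc m₁ m) ω ≤ deg M n r ω i := by
    rw [deg_eq_count M (hr'.le.trans hrr) hi']
    refine count_mono (fun j hj => ?_) fun j _ hj => linkEvent_mono M hr' hrr univ i j hj
    simp only [Finset.mem_Icc, Finset.mem_Ioc, Finset.mem_erase] at hi hj ⊢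
    omega
  exact h.trans (by exact_mod_cast h2.trans h1)

variable [IsProbabilityMeasure P] {γ : ℝ}

lemma exists_pow_gt {δ : ℝ} (hδ : 0 < δ) : ∃ p : ℕ, 2 ≤ p ∧ 1 < δ * p := by
  obtain ⟨p, hp⟩ := exists_nat_gt (1 / δ)
  refine ⟨p + 2, by omega, ?_⟩
  rw [div_lt_iff₀ hδ] at hp
  push_cast
  nlinarith

lemma ae_eventually_maxDeg_le (hd : d ≠ 0) (hγ : 0 < γ) {a : ℝ} (ha : 1 < a) (hH : 1 < γ * H a) :
    ∀ᵐ ω ∂P, ∀ᶠ n : ℕ in atTop,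
      (maxDeg M n (rhat M γ n) ω : ℝ) ≤ a * (γ * Real.log n) := by
  obtain ⟨ε, hε, δ, hδ, hB⟩ := exists_upper_tail M hd hγ ha hH
  obtain ⟨p, hp2, hp⟩ := exists_pow_gt hδ
  have hp0 : p ≠ 0 := by omega
  have hη : 1 < (1 + ε) / (1 + ε / 2) := by rw [one_lt_div (by positivity)]; linarith
  have hN : ∀ᶠ n : ℕ in atTop, P.real {ω | (1 + ε / 2) * n ≤ M.N n ω} ≤ (n : ℝ) ^ (-1 : ℝ) := by
    filter_upwards [eventually_exp_le_rpow (H_pos (x := 1 + ε / 2) (by positivity)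
      (by linarith))] with n hn
    exact (measureReal_N_ge_le M n (by linarith)).trans hn
  filter_upwards [ae_eventually_notMem_pow hB hp0 hp,
    ae_eventually_notMem_pow hN hp0 (by rw [one_mul]; exact_mod_cast hp2)] with ω h1 h2
  obtain ⟨k₀, hk₀⟩ := eventually_atTop.1 (h1.and (((tendsto_add_atTop_nat 1).eventually h2).and
    ((eventually_succ_pow_le p hη).and (eventually_ge_atTop 3))))
  filter_upwards [eventually_ge_atTop (k₀ ^ p)] with n hn
  obtain ⟨k, hk, hkn, hnk⟩ := exists_pow_le_lt hp0 hn
  obtain ⟨g1, g2, g3, g4⟩ := hk₀ k hk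
  have h3 : 3 ≤ k ^ p := g4.trans (Nat.le_self_pow hp0 k)
  have hkpos : (0 : ℝ) < ((k ^ p : ℕ) : ℝ) := by exact_mod_cast (by omega : 0 < k ^ p)
  have hlog : Real.log ((k ^ p : ℕ) : ℝ) ≤ Real.log n :=
    Real.log_le_log hkpos (by exact_mod_cast hkn)
  have hlog0 : 0 ≤ Real.log ((k ^ p : ℕ) : ℝ) := Real.log_natCast_nonneg _
  have hNle : M.N n ω ≤ ⌊(1 + ε) * ((k ^ p : ℕ) : ℝ)⌋₊ := by
    refine Nat.le_floor ?_
    have hmono : (M.N n ω : ℝ) ≤ M.N ((k + 1) ^ p) ω := by exact_mod_cast M.N_mono ω hnk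
    have hlt : (M.N ((k + 1) ^ p) ω : ℝ) < (1 + ε / 2) * (((k + 1) ^ p : ℕ) : ℝ) := not_le.1 g2
    calc (M.N n ω : ℝ) ≤ (1 + ε / 2) * (((k + 1) ^ p : ℕ) : ℝ) := hmono.trans hlt.le
      _ ≤ (1 + ε / 2) * ((1 + ε) / (1 + ε / 2) * ((k ^ p : ℕ) : ℝ)) := by gcongr
      _ = _ := by field_simp
  refine (maxDeg_le_of_forall_count_lt M (y := a * (γ * Real.log ((k ^ p : ℕ) : ℝ)))
    (rhat_pos M hγ (by omega)) (rhat_anti M hγ h3 hkn) (by positivity) hNle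
    fun i hi => ?_).trans (by gcongr)
  by_contra! hle
  exact g1 ⟨i, hi, hle⟩

lemma ae_eventually_le_maxDeg (hd : d ≠ 0) (hγ : 0 < γ) {a : ℝ} (ha : 1 ≤ a) (hH : γ * H a < 1) :
    ∀ᵐ ω ∂P, ∀ᶠ n : ℕ in atTop,
      a * (γ * Real.log n) ≤ maxDeg M n (rhat M γ n) ω := by
  obtain ⟨ε, hε, hε4, δ, hδ, hB⟩ := exists_lower_tail M hd hγ ha hH
  obtain ⟨p, hp2, hp⟩ := exists_pow_gt hδ
  have hp0 : p ≠ 0 := by omega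
  have hε1 : 0 < 1 - ε := by linarith
  have hη : 1 < (1 - ε / 2) / (1 - ε) := by rw [one_lt_div hε1]; linarith
  have hN : ∀ᶠ n : ℕ in atTop, P.real {ω | (M.N n ω : ℝ) ≤ (1 - ε / 2) * n} ≤
      (n : ℝ) ^ (-1 : ℝ) := by
    filter_upwards [eventually_exp_le_rpow (H_pos (x := 1 - ε / 2) (by linarith)
      (by linarith))] with n hn
    exact (measureReal_N_le_le M n (by linarith) (by linarith)).trans hn
  filter_upwards [ae_eventually_notMem_pow hB hp0 hp,
    ae_eventually_notMem_pow hN hp0 (by rw [one_mul]; exact_mod_cast hp2)] with ω h1 h2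
  obtain ⟨k₀, hk₀⟩ := eventually_atTop.1 (((tendsto_add_atTop_nat 1).eventually h1).and (h2.and
    ((eventually_succ_pow_le p hη).and (eventually_ge_atTop 3))))
  filter_upwards [eventually_ge_atTop (k₀ ^ p)] with n hn
  obtain ⟨k, hk, hkn, hnk⟩ := exists_pow_le_lt hp0 hn
  obtain ⟨g1, g2, g3, g4⟩ := hk₀ k hk
  have h3 : 3 ≤ n := (g4.trans (Nat.le_self_pow hp0 k)).trans hkn
  have hn0 : (0 : ℝ) < n := by exact_mod_cast (by omega : 0 < n)
  have hlog : Real.log n ≤ Real.log (((k + 1) ^ p : ℕ) : ℝ) :=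
    Real.log_le_log hn0 (by exact_mod_cast hnk)
  have hNle : ⌊(1 - ε) * (((k + 1) ^ p : ℕ) : ℝ)⌋₊ ≤ M.N n ω := by
    refine Nat.floor_le_of_le ?_
    have hmono : (M.N (k ^ p) ω : ℝ) ≤ M.N n ω := by exact_mod_cast M.N_mono ω hkn
    have hlt : (1 - ε / 2) * ((k ^ p : ℕ) : ℝ) < M.N (k ^ p) ω := not_le.1 g2
    calc (1 - ε) * (((k + 1) ^ p : ℕ) : ℝ)
        ≤ (1 - ε) * ((1 - ε / 2) / (1 - ε) * ((k ^ p : ℕ) : ℝ)) := by gcongr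
      _ = (1 - ε / 2) * ((k ^ p : ℕ) : ℝ) := by field_simp
      _ ≤ _ := hlt.le.trans hmono
  obtain ⟨i, hi, hle⟩ : ∃ i ∈ Finset.Icc 1 ⌊ε * (((k + 1) ^ p : ℕ) : ℝ)⌋₊,
      a * (γ * Real.log (((k + 1) ^ p : ℕ) : ℝ)) ≤
        count (linkEvent M (rhat M γ ((k + 1) ^ p)) univ i)
          (Finset.Ioc ⌊ε * (((k + 1) ^ p : ℕ) : ℝ)⌋₊ ⌊(1 - ε) * (((k + 1) ^ p : ℕ) : ℝ)⌋₊) ω := by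
    by_contra! hcon
    exact g1 hcon
  refine le_trans (by gcongr) (le_maxDeg_of_le_count M (rhat_pos M hγ (by omega))
    (rhat_anti M hγ h3 hnk) hNle (Nat.floor_le_floor ?_) hi hle)
  gcongr
  linarith

end RCM

namespace RCM

variable {d : ℕ} {Ω : Type*} [MeasurableSpace Ω] {P : Measure Ω}

/-- Theorem 3(ii): a.s. `Δ_n/log n → γ H₊⁻¹(1/γ)`. -/
theorem maxDeg_tendsto (hd : 2 ≤ d) [IsProbabilityMeasure P] (M : Model d P)
    {c : ℝ} (hc : 0 < c)
    (hg : M.g =o[atTop] fun r : ℝ => Real.exp (-(c * r)))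
    {γ : ℝ} (hγ : 0 < γ) :
    ∀ᵐ ω ∂P, Tendsto
      (fun n : ℕ => (maxDeg M n (rhat M γ n) ω : ℝ) / Real.log n) atTop
        (nhds (γ * Hplusinv (1 / γ))) := by
  have hd0 : d ≠ 0 := by omega
  have hγ' : 0 < 1 / γ := by positivity
  have hL := one_lt_Hplusinv hγ'
  have hup : ∀ᵐ ω ∂P, ∀ a : ℚ, Hplusinv (1 / γ) < a → ∀ᶠ n : ℕ in atTop,
      (maxDeg M n (rhat M γ n) ω : ℝ) ≤ a * (γ * Real.log n) := by
    refine ae_all_iff.2 fun a => ?_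
    by_cases ha : Hplusinv (1 / γ) < a
    · have hH := lt_H_of_Hplusinv_lt hγ' ha
      rw [div_lt_iff₀ hγ, mul_comm] at hH
      filter_upwards [ae_eventually_maxDeg_le M hd0 hγ (hL.trans ha) hH] with ω hω _ using hω
    · exact Eventually.of_forall fun _ h => absurd h ha
  have hlo : ∀ᵐ ω ∂P, ∀ a : ℚ, 1 ≤ (a : ℝ) ∧ (a : ℝ) < Hplusinv (1 / γ) → ∀ᶠ n : ℕ in atTop,
      a * (γ * Real.log n) ≤ maxDeg M n (rhat M γ n) ω := by
    refine ae_all_iff.2 fun a => ?_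
    by_cases ha : 1 ≤ (a : ℝ) ∧ (a : ℝ) < Hplusinv (1 / γ)
    · have hH := H_lt_of_lt_Hplusinv ha.1 ha.2
      rw [lt_div_iff₀ hγ, mul_comm] at hH
      filter_upwards [ae_eventually_le_maxDeg M hd0 hγ ha.1 hH] with ω hω _ using hω
    · exact Eventually.of_forall fun _ h => absurd h ha
  filter_upwards [hup, hlo] with ω hω1 hω2
  have hlogpos : ∀ᶠ n : ℕ in atTop, 0 < Real.log n := by
    filter_upwards [eventually_ge_atTop 2] with n hn
    exact Real.log_pos (by exact_mod_cast hn)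
  refine tendsto_order.2 ⟨fun y hy => ?_, fun y hy => ?_⟩
  · obtain ⟨a, ha1, ha2⟩ := exists_rat_btwn
      (max_lt ((div_lt_iff₀ hγ).2 (by rwa [mul_comm])) hL : max (y / γ) 1 < Hplusinv (1 / γ))
    rw [max_lt_iff] at ha1
    filter_upwards [hω2 a ⟨ha1.2.le, ha2⟩, hlogpos] with n hn hlog
    rw [lt_div_iff₀ hlog]
    have := (div_lt_iff₀ hγ).1 ha1.1
    nlinarith
  · obtain ⟨a, ha1, ha2⟩ := exists_rat_btwn
      ((lt_div_iff₀ hγ).2 (by rwa [mul_comm]) : Hplusinv (1 / γ) < y / γ)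
    filter_upwards [hω1 a ha1, hlogpos] with n hn hlog
    rw [div_lt_iff₀ hlog]
    have := (lt_div_iff₀ hγ).1 ha2
    nlinarith

end RCM
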